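/- (Theorem 2: local Hölder stability for the inverse zeroth-order coefficient problem.) Fix H ∈ 𝓗 and a ∈ C¹(closure(Ω)) with a(x) ≠ 0 for every x ∈ closure(Ω), and let 𝓟 := {p : Ω → ℝ measurable with |p(x)| ≤ M for a.e. x}. Then there exists a graph-type subdomain D with D ⊂ Ω and 0 ∈ ∂D ∩ ∂Ω (independent of M₀, p₁, p₂ below), and for every M₀ > 0 there exist constants C > 0 and θ ∈ (0,1), such that the following holds: whenever p₁, p₂ ∈ 𝓟 and, for j = 1,2, u_j : closure(Ω) × [0,T] → ℝ are functions such that u_j and ∂_t u_j are C¹ on closure(Ω) × [0,T], u_j satisfies ∂_t u_j + ⟨H(x), ∇_x u_j⟩ + p_j(x) u_j = 0 on Ω × (0,T) and u_j(x,0) = a(x) on Ω, and ∫₀^T (sup_{x∈D} |∂_t u_j(x,t)|)² dt ≤ M₀², one has (∫_D |p₁(x) − p₂(x)|² dx)^{1/2} ≤ C ( ‖∂_t u₁ − ∂_t u₂‖_{L²(Γ×(0,T))}^θ + ‖∂_t u₁ − ∂_t u₂‖_{L²(Γ×(0,T))} ). -/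

import Mathlib

noncomputable section

open MeasureTheory Metric Set
open scoped RealInnerProductSpace

abbrev Esp (n : ℕ) : Type := EuclideanSpace ℝ (Fin n)

/-- The point `(x', xₙ) ∈ ℝ^{d+1} = ℝ^d × ℝ`. -/
noncomputable def graphMk (d : ℕ) (x' : Esp d) (xn : ℝ) : Esp (d+1) :=
  (EuclideanSpace.equiv (Fin (d+1)) ℝ).symm
    (Fin.snoc (⇑(EuclideanSpace.equiv (Fin d) ℝ) x') xn)

/-- `H` is `(M, δ₀)`-admissible on the compact set `K`. -/
def IsAdmissible {n : ℕ} (M δ₀ : ℝ) (K : Set (Esp n)) (H : Esp n → Esp n) : Prop :=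
  ∃ U : Set (Esp n), IsOpen U ∧ Convex ℝ U ∧ K ⊆ U ∧ ContDiffOn ℝ 1 H U ∧
    (∀ x ∈ U, ‖H x‖ ≤ M) ∧ (∀ x ∈ U, ‖fderiv ℝ H x‖ ≤ M) ∧ (∀ x ∈ K, δ₀ < ‖H x‖)

/-- `ψ_H(x) = ⟨x, H(x)⟩`. -/
noncomputable def psiW {n : ℕ} (H : Esp n → Esp n) (x : Esp n) : ℝ := ⟪x, H x⟫

/-- The Carleman weight `φ_H(x,t) = -βt + ψ_H(x)`. -/
noncomputable def phiW {n : ℕ} (β : ℝ) (H : Esp n → Esp n) (x : Esp n) (t : ℝ) : ℝ :=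
  -(β * t) + psiW H x

/-- Outward unit normal `ν₁` of the upper graph `xₙ = ℓ(x')`. -/
noncomputable def nuUp (d : ℕ) (ℓ : Esp d → ℝ) (x' : Esp d) : Esp (d+1) :=
  (Real.sqrt (1 + ‖gradient ℓ x'‖ ^ 2))⁻¹ • graphMk d (-(gradient ℓ x')) 1

/-- Outward unit normal `ν₂` of the lower graph `xₙ = m(x')`. -/
noncomputable def nuDown (d : ℕ) (m : Esp d → ℝ) (x' : Esp d) : Esp (d+1) :=
  (Real.sqrt (1 + ‖gradient m x'‖ ^ 2))⁻¹ • graphMk d (gradient m x') (-1)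

/-- Area element `ω(x') = √(1 + |∇m(x')|²)` of the graph of `m`. -/
noncomputable def omegaW (d : ℕ) (m : Esp d → ℝ) (x' : Esp d) : ℝ :=
  Real.sqrt (1 + ‖gradient m x'‖ ^ 2)

/-- The graph domain `D = {(x', xₙ) : |x'| < ρ₁, ℓ(x') − ℓ̃(x') < xₙ < ℓ(x')}`. -/
def graphDomain (d : ℕ) (ρ₁ : ℝ) (ℓ ℓt : Esp d → ℝ) : Set (Esp (d+1)) :=
  {x | ∃ x' : Esp d, ∃ xn : ℝ, ‖x'‖ < ρ₁ ∧ ℓ x' - ℓt x' < xn ∧ xn < ℓ x' ∧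
    x = graphMk d x' xn}

/-!
Since `H` points outward at `0`, the depth `k = ℓ(x') - xₙ` below the boundary graph decreases along
`H` near `0` at some rate `δ > 0`. Hence every characteristic that meets a sufficiently thin graph
domain `D` leaves it through `Γ` before time `T / 2`.

The difference `y = ∂ₜ(u₁ - u₂)` solves the equation of `u₁` with source `(p₂ - p₁) ∂ₜu₂` and
initial value `(p₂ - p₁) a`. The weight `W = exp (-κ k / δ)`, switched off before time `T`, grows at
rate `κ` along characteristics. Integrating `∂ₜ(y² W) + div (y² W H)` over `D × (0, T)` bounds the
initial energy `∫ (p₂ - p₁)² a² W(·, 0)` by the flux of `y²` through `Γ`, which is the data, and a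
source term that is absorbed for large `κ`, as `a` is bounded away from zero. The resulting
estimate is linear in the data.
-/

section Divergence

theorem indicator_eventuallyEq_zero {X Y : Type*} [TopologicalSpace X] [Zero Y] {f : X → Y}
    {U K : Set X} (hK : IsClosed K) (hf : ∀ x ∈ U \ K, f x = 0) {x : X} (hx : x ∉ K) :
    U.indicator f =ᶠ[nhds x] 0 := by
  filter_upwards [hK.isOpen_compl.mem_nhds hx] with y hy
  exact indicator_apply_eq_zero.2 fun hyU => hf y ⟨hyU, hy⟩

variable {E F : Type*} [NormedAddCommGroup E] [NormedSpace ℝ E] [NormedAddCommGroup F]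
  [NormedSpace ℝ F] {U K : Set E}

/-- The divergence of a vector field on a finite-dimensional space, encoded as the trace of its
derivative so that no basis has to be chosen. -/
def divergence (H : E → E) (x : E) : ℝ := LinearMap.trace ℝ E (fderiv ℝ H x)

theorem continuousOn_divergence [FiniteDimensional ℝ E] {H : E → E} (hU : IsOpen U)
    (hH : ContDiffOn ℝ 1 H U) : ContinuousOn (divergence H) U :=
  let traceL : (E →L[ℝ] E) →ₗ[ℝ] ℝ := LinearMap.trace ℝ E ∘ₗ ContinuousLinearMap.coeLM ℝ
  traceL.continuous_of_finiteDimensional.comp_continuousOn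
    (hH.continuousOn_fderiv_of_isOpen hU le_rfl)

theorem divergence_eq_sum_coord {ι : Type*} [Fintype ι] [FiniteDimensional ℝ E]
    (b : Module.Basis ι ℝ E) {H : E → E} {x : E} (hH : DifferentiableAt ℝ H x) :
    divergence H x = ∑ i, fderiv ℝ (fun y => b.coord i (H y)) x (b i) := by
  classical
  have hcoord (i : ι) : fderiv ℝ (fun y => b.coord i (H y)) x (b i)
      = b.coord i (fderiv ℝ H x (b i)) :=
    DFunLike.congr_fun
      (((b.coord i).toContinuousLinearMap.hasFDerivAt.comp x hH.hasFDerivAt).fderiv) (b i)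
  rw [divergence, LinearMap.trace_eq_matrix_trace ℝ b, Matrix.trace]
  exact Finset.sum_congr rfl fun i _ => by
    rw [hcoord, Matrix.diag_apply, LinearMap.toMatrix_apply, Module.Basis.coord_apply]; rfl

theorem divergence_smul [FiniteDimensional ℝ E] {g : E → ℝ} {H : E → E} {x : E}
    (hg : DifferentiableAt ℝ g x) (hH : DifferentiableAt ℝ H x) :
    divergence (fun y => g y • H y) x = fderiv ℝ g x (H x) + g x * divergence H x := by
  have htrace : LinearMap.trace ℝ E ((fderiv ℝ g x).smulRight (H x)) = fderiv ℝ g x (H x) :=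
    LinearMap.trace_smulRight (fderiv ℝ g x : E →ₗ[ℝ] ℝ) (H x)
  rw [divergence, fderiv_fun_smul hg hH, ContinuousLinearMap.toLinearMap_add, map_add,
    ContinuousLinearMap.toLinearMap_smul, map_smul, htrace, smul_eq_mul, add_comm, divergence]

theorem divergence_congr {G H : E → E} {x : E} (h : G =ᶠ[nhds x] H) :
    divergence G x = divergence H x := by
  rw [divergence, h.fderiv_eq, divergence]

theorem contDiff_indicator {f : E → F} {n : WithTop ℕ∞} (hU : IsOpen U) (hK : IsClosed K)
    (hKU : K ⊆ U) (hf : ContDiffOn ℝ n f U) (hfK : ∀ x ∈ U \ K, f x = 0) :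
    ContDiff ℝ n (U.indicator f) := by
  refine contDiff_iff_contDiffAt.2 fun x => ?_
  by_cases hx : x ∈ K
  · have hxU := hU.mem_nhds (hKU hx)
    exact (hf.contDiffAt hxU).congr_of_eventuallyEq (eqOn_indicator.eventuallyEq_of_mem hxU)
  · exact contDiffAt_const.congr_of_eventuallyEq (indicator_eventuallyEq_zero hK hfK hx)

variable [FiniteDimensional ℝ E] [MeasurableSpace E] [BorelSpace E] (μ : Measure E)
  [μ.IsAddHaarMeasure]

theorem integral_fderiv_apply_eq_zero {g : E → ℝ} (hg : ContDiff ℝ 1 g)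
    (hgc : HasCompactSupport g) (v : E) : ∫ x, fderiv ℝ g x v ∂μ = 0 := by
  have hderiv : Integrable (fun x => fderiv ℝ g x v) μ :=
    ((hg.continuous_fderiv one_ne_zero).clm_apply continuous_const).integrable_of_hasCompactSupport
      (hgc.fderiv_apply ℝ v)
  have hint : Integrable g μ := hg.continuous.integrable_of_hasCompactSupport hgc
  simpa using integral_mul_fderiv_eq_neg_fderiv_mul_of_integrable (f := fun _ => (1 : ℝ)) (g := g)
    (v := v) (μ := μ) (by simp) (by simpa using hderiv) (by simpa using hint)
    (fun _ _ => differentiableAt_const _) (fun x _ => hg.differentiable one_ne_zero x)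

theorem integral_divergence_eq_zero {G : E → E} (hG : ContDiff ℝ 1 G)
    (hGc : HasCompactSupport G) : ∫ x, divergence G x ∂μ = 0 := by
  let b := Module.finBasis ℝ E
  have hcoord (i) : ContDiff ℝ 1 (fun y => b.coord i (G y)) :=
    (b.coord i).toContinuousLinearMap.contDiff.comp hG
  have hcoordc (i) : HasCompactSupport (fun y => b.coord i (G y)) :=
    hGc.comp_left (map_zero (b.coord i))
  simp_rw [divergence_eq_sum_coord b (hG.differentiable one_ne_zero _)]
  rw [integral_finsetSum]
  · exact Finset.sum_eq_zero fun i _ => integral_fderiv_apply_eq_zero μ (hcoord i) (hcoordc i) (b i)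
  · intro i _
    exact (((hcoord i).continuous_fderiv one_ne_zero).clm_apply
      continuous_const).integrable_of_hasCompactSupport ((hcoordc i).fderiv_apply ℝ (b i))

theorem setIntegral_fderiv_apply_add_mul_divergence_eq_zero {g : E → ℝ} {H : E → E}
    (hU : IsOpen U) (hK : IsCompact K) (hKU : K ⊆ U) (hg : ContDiffOn ℝ 1 g U)
    (hH : ContDiffOn ℝ 1 H U) (hgK : ∀ x ∈ U \ K, g x = 0) :
    ∫ x in U, (fderiv ℝ g x (H x) + g x * divergence H x) ∂μ = 0 := by
  set G : E → E := U.indicator fun x => g x • H x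
  have hzero : ∀ x ∈ U \ K, g x • H x = 0 := fun x hx => by rw [hgK x hx, zero_smul]
  have hGc : HasCompactSupport G := HasCompactSupport.intro hK fun x hx =>
    (indicator_eventuallyEq_zero hK.isClosed hzero hx).self_of_nhds
  have hdiv : ∀ x ∈ U, fderiv ℝ g x (H x) + g x * divergence H x = divergence G x := by
    intro x hx
    have hxU := hU.mem_nhds hx
    rw [divergence_congr (eqOn_indicator.eventuallyEq_of_mem hxU), divergence_smul
      ((hg.differentiableOn one_ne_zero).differentiableAt hxU)
      ((hH.differentiableOn one_ne_zero).differentiableAt hxU)]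
  have hoff : ∀ x ∉ U, divergence G x = 0 := fun x hx => by
    rw [divergence_congr (indicator_eventuallyEq_zero hK.isClosed hzero fun h => hx (hKU h)),
      divergence, fderiv_zero]
    simp
  rw [setIntegral_congr_fun hU.measurableSet hdiv, setIntegral_eq_integral_of_forall_compl_eq_zero
    hoff]
  exact integral_divergence_eq_zero μ (contDiff_indicator hU hK.isClosed hKU (hg.smul hH) hzero) hGc

end Divergence

section Cylinder

theorem cylinder_mem_nhds {X : Type*} [TopologicalSpace X] {D : Set X} {T : ℝ} (hD : IsOpen D)
    {q : X × ℝ} (hq : q ∈ D ×ˢ Ioo 0 T) : D ×ˢ Icc 0 T ∈ nhds q :=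
  Filter.mem_of_superset ((hD.prod isOpen_Ioo).mem_nhds hq) (prod_mono_right Ioo_subset_Icc_self)

theorem continuousOn_time_slice {X : Type*} [TopologicalSpace X] {D : Set X} {T : ℝ}
    {z : X × ℝ → ℝ} (hz : ContinuousOn z (D ×ˢ Icc 0 T)) {x : X} (hx : x ∈ D) :
    ContinuousOn (fun t => z (x, t)) (Icc 0 T) :=
  hz.comp (by fun_prop) fun _ ht => ⟨hx, ht⟩

theorem integrableOn_cylinder_of_eq_zero_off_compact {X : Type*} [TopologicalSpace X] [T2Space X]
    [MeasurableSpace X] [OpensMeasurableSpace X] {μ : Measure X}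
    [IsFiniteMeasureOnCompacts μ] [SFinite μ] {D K : Set X} {T : ℝ} {z : X × ℝ → ℝ}
    (hD : IsOpen D) (hK : IsCompact K) (hz : ContinuousOn z (K ×ˢ Icc 0 T))
    (hzK : ∀ q ∈ (D \ K) ×ˢ Ioo 0 T, z q = 0) :
    IntegrableOn z (D ×ˢ Ioo 0 T) (μ.prod volume) :=
  (hz.integrableOn_compact (hK.prod isCompact_Icc)).of_forall_sdiff_eq_zero
    (hD.prod isOpen_Ioo).measurableSet
    fun q hq => hzK q ⟨⟨hq.1.1, fun h => hq.2 ⟨h, Ioo_subset_Icc_self hq.1.2⟩⟩, hq.1.2⟩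

variable {E : Type*} [NormedAddCommGroup E] [NormedSpace ℝ E] {D K : Set E} {T : ℝ}
  {z : E × ℝ → ℝ}

theorem hasFDerivAt_of_cylinder (hD : IsOpen D) (hz : ContDiffOn ℝ 1 z (D ×ˢ Icc 0 T)) {q : E × ℝ}
    (hq : q ∈ D ×ˢ Ioo 0 T) : HasFDerivAt z (fderiv ℝ z q) q :=
  ((hz.differentiableOn one_ne_zero).differentiableAt (cylinder_mem_nhds hD hq)).hasFDerivAt

theorem hasDerivAt_time_slice (hD : IsOpen D) (hz : ContDiffOn ℝ 1 z (D ×ˢ Icc 0 T)) {x : E} {t : ℝ}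
    (hx : x ∈ D) (ht : t ∈ Ioo 0 T) :
    HasDerivAt (fun s => z (x, s)) (fderiv ℝ z (x, t) (0, 1)) t :=
  (hasFDerivAt_of_cylinder hD hz ⟨hx, ht⟩).comp_hasDerivAt t
    ((hasDerivAt_const t x).prodMk (hasDerivAt_id t))

theorem hasFDerivAt_space_slice (hD : IsOpen D) (hz : ContDiffOn ℝ 1 z (D ×ˢ Icc 0 T)) {x : E}
    {t : ℝ} (hx : x ∈ D) (ht : t ∈ Ioo 0 T) :
    HasFDerivAt (fun y => z (y, t)) (fderiv ℝ z (x, t) ∘L ContinuousLinearMap.inl ℝ E ℝ) x :=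
  (hasFDerivAt_of_cylinder hD hz ⟨hx, ht⟩).comp x (hasFDerivAt_prodMk_left x t)

theorem fderiv_eq_zero_of_eq_zero_off (hD : IsOpen D) (hK : IsClosed K)
    (hzK : ∀ q ∈ (D \ K) ×ˢ Icc 0 T, z q = 0) {q : E × ℝ} (hq : q ∈ (D \ K) ×ˢ Ioo 0 T) :
    fderiv ℝ z q = 0 := by
  have hzero : z =ᶠ[nhds q] fun _ => 0 := by
    filter_upwards [cylinder_mem_nhds (hD.sdiff hK) hq] with r hr using hzK r hr
  rw [hzero.fderiv_eq, fderiv_fun_const, Pi.zero_apply]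

variable [MeasurableSpace E] [BorelSpace E] {μ : Measure E}

theorem integrableOn_fderiv_apply_of_eq_zero_off_compact [IsFiniteMeasureOnCompacts μ] [SFinite μ]
    (hD : IsOpen D) (hK : IsCompact K) (hKD : K ⊆ D) (hz : ContDiffOn ℝ 1 z (D ×ˢ Icc 0 T))
    (hzK : ∀ q ∈ (D \ K) ×ˢ Icc 0 T, z q = 0) {v : E → E × ℝ} (hv : ContinuousOn v D) :
    IntegrableOn (fun q => fderiv ℝ z q (v q.1)) (D ×ˢ Ioo 0 T) (μ.prod volume) := by
  have hzero : ∀ q ∈ (D \ K) ×ˢ Ioo 0 T, fderiv ℝ z q = 0 := fun q hq =>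
    fderiv_eq_zero_of_eq_zero_off hD hK.isClosed hzK hq
  have hwithin : EqOn (fderivWithin ℝ z (D ×ˢ Icc 0 T)) (fderiv ℝ z) (D ×ˢ Ioo 0 T) := fun q hq =>
    fderivWithin_of_mem_nhds (cylinder_mem_nhds hD hq)
  rcases le_or_gt T 0 with hT | hT
  · simp [Ioo_eq_empty hT.not_gt]
  have hcont : ContinuousOn (fun q => fderivWithin ℝ z (D ×ˢ Icc 0 T) q (v q.1))
      (D ×ˢ Icc 0 T) :=
    (hz.continuousOn_fderivWithin (hD.uniqueDiffOn.prod (uniqueDiffOn_Icc hT)) le_rfl).clm_apply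
      (hv.comp continuousOn_fst fun _ hq => hq.1)
  refine (integrableOn_cylinder_of_eq_zero_off_compact hD hK (hcont.mono (prod_mono_left hKD))
    fun q hq => ?_).congr_fun (fun q hq => ?_) (hD.prod isOpen_Ioo).measurableSet
  · rw [hwithin (prod_mono_left sdiff_subset hq), hzero q hq, zero_apply]
  · simp only [hwithin hq]

theorem integral_fderiv_time_eq_neg [IsFiniteMeasureOnCompacts μ] [SFinite μ] (hT : 0 < T)
    (hD : IsOpen D) (hK : IsCompact K) (hKD : K ⊆ D) (hz : ContDiffOn ℝ 1 z (D ×ˢ Icc 0 T))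
    (hzK : ∀ q ∈ (D \ K) ×ˢ Icc 0 T, z q = 0) (hzT : ∀ x ∈ D, z (x, T) = 0) :
    ∫ q in D ×ˢ Ioo 0 T, fderiv ℝ z q (0, 1) ∂(μ.prod volume) = -∫ x in D, z (x, 0) ∂μ := by
  have hint : IntegrableOn (fun q => fderiv ℝ z q (0, 1)) (D ×ˢ Ioo 0 T) (μ.prod volume) :=
    integrableOn_fderiv_apply_of_eq_zero_off_compact hD hK hKD hz hzK continuousOn_const
  have hslice := hint
  rw [IntegrableOn, ← Measure.prod_restrict] at hslice
  rw [setIntegral_prod _ hint, ← integral_neg]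
  refine integral_congr_ae ?_
  filter_upwards [hslice.prod_right_ae, ae_restrict_mem hD.measurableSet] with x hx hxD
  rw [← integral_Ioc_eq_integral_Ioo, ← intervalIntegral.integral_of_le hT.le,
    intervalIntegral.integral_eq_sub_of_hasDerivAt_of_le hT.le
      (continuousOn_time_slice hz.continuousOn hxD)
      (fun t ht => hasDerivAt_time_slice hD hz hxD ht)
      ((intervalIntegrable_iff_integrableOn_Ioo_of_le hT.le).2 hx), hzT x hxD, zero_sub]

variable [FiniteDimensional ℝ E]

theorem integral_fderiv_space_add_mul_divergence_eq_zero [μ.IsAddHaarMeasure] {H : E → E}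
    (hD : IsOpen D) (hK : IsCompact K) (hKD : K ⊆ D) (hz : ContDiffOn ℝ 1 z (D ×ˢ Icc 0 T))
    (hzK : ∀ q ∈ (D \ K) ×ˢ Icc 0 T, z q = 0) (hH : ContDiffOn ℝ 1 H D)
    (hint : IntegrableOn (fun q => fderiv ℝ z q (H q.1, 0) + z q * divergence H q.1)
      (D ×ˢ Ioo 0 T) (μ.prod volume)) :
    ∫ q in D ×ˢ Ioo 0 T, (fderiv ℝ z q (H q.1, 0) + z q * divergence H q.1) ∂(μ.prod volume)
      = 0 := by
  rw [IntegrableOn, ← Measure.prod_restrict] at hint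
  rw [← Measure.prod_restrict, integral_prod_symm _ hint]
  refine (setIntegral_congr_fun measurableSet_Ioo fun t ht => ?_).trans (integral_zero _ _)
  have htime := Ioo_subset_Icc_self ht
  have hslice : ContDiffOn ℝ 1 (fun x => z (x, t)) D :=
    hz.comp (f := fun x : E => (x, t)) (by fun_prop) fun x hx => ⟨hx, htime⟩
  refine (setIntegral_congr_fun hD.measurableSet fun x hx => ?_).trans
    (setIntegral_fderiv_apply_add_mul_divergence_eq_zero μ hD hK hKD hslice hH
      fun x hx => hzK (x, t) ⟨hx, htime⟩)
  simp [(hasFDerivAt_space_slice hD hz hx ht).fderiv]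

/-- The integrand is the divergence `∂ₜ z + div (z H)` in space-time. -/
theorem integral_transport [μ.IsAddHaarMeasure] {H : E → E} (hT : 0 < T)
    (hD : IsOpen D) (hK : IsCompact K) (hKD : K ⊆ D) (hz : ContDiffOn ℝ 1 z (D ×ˢ Icc 0 T))
    (hzK : ∀ q ∈ (D \ K) ×ˢ Icc 0 T, z q = 0) (hzT : ∀ x ∈ D, z (x, T) = 0)
    (hH : ContDiffOn ℝ 1 H D) :
    IntegrableOn (fun q => fderiv ℝ z q (H q.1, 1) + z q * divergence H q.1)
      (D ×ˢ Ioo 0 T) (μ.prod volume) ∧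
    ∫ q in D ×ˢ Ioo 0 T, (fderiv ℝ z q (H q.1, 1) + z q * divergence H q.1) ∂(μ.prod volume)
      = -∫ x in D, z (x, 0) ∂μ := by
  have hdiv : IntegrableOn (fun q => z q * divergence H q.1) (D ×ˢ Ioo 0 T) (μ.prod volume) :=
    integrableOn_cylinder_of_eq_zero_off_compact hD hK
      ((hz.continuousOn.mono (prod_mono_left hKD)).mul
        (((continuousOn_divergence hD hH).mono hKD).comp continuousOn_fst fun _ hq => hq.1))
      fun q hq => by rw [hzK q ⟨hq.1, Ioo_subset_Icc_self hq.2⟩, zero_mul]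
  have hspace : IntegrableOn (fun q => fderiv ℝ z q (H q.1, 0) + z q * divergence H q.1)
      (D ×ˢ Ioo 0 T) (μ.prod volume) :=
    (integrableOn_fderiv_apply_of_eq_zero_off_compact hD hK hKD hz hzK
      (hH.continuousOn.prodMk continuousOn_const)).add hdiv
  have htime : IntegrableOn (fun q => fderiv ℝ z q (0, 1)) (D ×ˢ Ioo 0 T) (μ.prod volume) :=
    integrableOn_fderiv_apply_of_eq_zero_off_compact hD hK hKD hz hzK continuousOn_const
  have hsplit (q : E × ℝ) : fderiv ℝ z q (H q.1, 1) + z q * divergence H q.1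
      = fderiv ℝ z q (0, 1) + (fderiv ℝ z q (H q.1, 0) + z q * divergence H q.1) := by
    rw [← add_assoc, ← map_add, Prod.mk_add_mk, zero_add, add_zero]
  simp_rw [hsplit]
  refine ⟨htime.add hspace, ?_⟩
  rw [integral_add htime hspace, integral_fderiv_time_eq_neg hT hD hK hKD hz hzK hzT,
    integral_fderiv_space_add_mul_divergence_eq_zero hD hK hKD hz hzK hH hspace, add_zero]

end Cylinder

section Cutoff

/-- A smooth cutoff of `{r ≤ 0}` at scale `1 / N`: zero for `r ≤ 1 / N` and one for `2 / N ≤ r`. -/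
def cutoff (N r : ℝ) : ℝ := Real.smoothTransition (N * r - 1)

variable {N r : ℝ}

theorem contDiff_cutoff (N : ℝ) : ContDiff ℝ 1 (cutoff N) :=
  Real.smoothTransition.contDiff.comp (by fun_prop)

theorem continuous_deriv_cutoff (N : ℝ) : Continuous (deriv (cutoff N)) :=
  (contDiff_cutoff N).continuous_deriv le_rfl

theorem hasDerivAt_cutoff (N r : ℝ) : HasDerivAt (cutoff N) (deriv (cutoff N) r) r :=
  ((contDiff_cutoff N).differentiable one_ne_zero r).hasDerivAt

theorem cutoff_nonneg (N r : ℝ) : 0 ≤ cutoff N r := Real.smoothTransition.nonneg _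

theorem cutoff_le_one (N r : ℝ) : cutoff N r ≤ 1 := Real.smoothTransition.le_one _

theorem cutoff_eq_zero (h : N * r ≤ 1) : cutoff N r = 0 :=
  Real.smoothTransition.zero_of_nonpos (by linarith)

theorem cutoff_eq_one (h : 2 ≤ N * r) : cutoff N r = 1 :=
  Real.smoothTransition.one_of_one_le (by linarith)

theorem deriv_cutoff_nonneg (hN : 0 ≤ N) (r : ℝ) : 0 ≤ deriv (cutoff N) r :=
  Monotone.deriv_nonneg fun _ _ hab =>
    Real.smoothTransition.monotone (sub_le_sub_right (mul_le_mul_of_nonneg_left hab hN) 1)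

theorem deriv_cutoff_eq_zero_of_le (h : N * r ≤ 1) : deriv (cutoff N) r = 0 :=
  IsLocalMin.deriv_eq_zero <| Filter.Eventually.of_forall fun s =>
    (cutoff_eq_zero h).trans_le (cutoff_nonneg N s)

theorem deriv_cutoff_eq_zero_of_ge (h : 2 ≤ N * r) : deriv (cutoff N) r = 0 :=
  IsLocalMax.deriv_eq_zero <| Filter.Eventually.of_forall fun s =>
    (cutoff_le_one N s).trans_eq (cutoff_eq_one h).symm

theorem cutoff_mul_cutoff_mem_Icc (N r s : ℝ) : cutoff N r * cutoff N s ∈ Icc 0 1 :=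
  ⟨mul_nonneg (cutoff_nonneg N r) (cutoff_nonneg N s),
    mul_le_one₀ (cutoff_le_one N r) (cutoff_nonneg N s) (cutoff_le_one N s)⟩

end Cutoff

section Weight

/-- The weight at depth `k` and time `t`. The exponential grows at rate `κ` along curves on which
the depth decreases at rate `δ`, and the second factor switches the weight off before time `T`. -/
def carlemanFactor (κ δ T k t : ℝ) : ℝ :=
  Real.exp (-(κ / δ * k)) * Real.smoothTransition (2 * (T - t - k / δ) / T)

variable {κ δ T : ℝ}

theorem contDiff_carlemanFactor (κ δ T : ℝ) :
    ContDiff ℝ 1 fun r : ℝ × ℝ => carlemanFactor κ δ T r.1 r.2 :=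
  (Real.contDiff_exp.comp (by fun_prop)).mul (Real.smoothTransition.contDiff.comp (by fun_prop))

theorem carlemanFactor_nonneg (κ δ T k t : ℝ) : 0 ≤ carlemanFactor κ δ T k t :=
  mul_nonneg (Real.exp_pos _).le (Real.smoothTransition.nonneg _)

theorem carlemanFactor_le_one (hκ : 0 ≤ κ) (hδ : 0 ≤ δ) {k : ℝ} (hk : 0 ≤ k) (t : ℝ) :
    carlemanFactor κ δ T k t ≤ 1 :=
  mul_le_one₀ (Real.exp_le_one_iff.2 (neg_nonpos.2 (by positivity)))
    (Real.smoothTransition.nonneg _) (Real.smoothTransition.le_one _)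

theorem antitone_carlemanFactor (hT : 0 ≤ T) (k : ℝ) : Antitone (carlemanFactor κ δ T k) :=
  fun _ _ hst => mul_le_mul_of_nonneg_left (Real.smoothTransition.monotone (by gcongr))
    (Real.exp_pos _).le

theorem carlemanFactor_final (hT : 0 ≤ T) (hδ : 0 ≤ δ) {k : ℝ} (hk : 0 ≤ k) :
    carlemanFactor κ δ T k T = 0 := by
  have hkδ : 0 ≤ k / δ := by positivity
  rw [carlemanFactor, Real.smoothTransition.zero_of_nonpos
    (div_nonpos_of_nonpos_of_nonneg (by linarith) hT), mul_zero]

theorem exp_neg_le_carlemanFactor_zero (hκ : 0 ≤ κ) (hδ : 0 < δ) (hT : 0 < T) {k : ℝ}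
    (hk : k ≤ δ * T / 2) : Real.exp (-(κ * T / 2)) ≤ carlemanFactor κ δ T k 0 := by
  have hkδ : k / δ ≤ T / 2 := by rw [div_le_iff₀ hδ]; linarith
  rw [carlemanFactor, Real.smoothTransition.one_of_one_le (by rw [le_div_iff₀ hT]; linarith),
    mul_one, Real.exp_le_exp, neg_le_neg_iff, div_mul_eq_mul_div, mul_div_assoc, mul_div_assoc]
  exact mul_le_mul_of_nonneg_left hkδ hκ

theorem exists_hasDerivAt_carlemanFactor (hκ : 0 ≤ κ) (hδ : 0 < δ) (hT : 0 < T) {k : ℝ → ℝ}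
    {k' s : ℝ} (t : ℝ) (hk : HasDerivAt k k' s) (hk' : k' ≤ -δ) :
    ∃ g', HasDerivAt (fun s => carlemanFactor κ δ T (k s) (t + s)) g' s ∧
      κ * carlemanFactor κ δ T (k s) (t + s) ≤ g' := by
  have htransition := ((Real.smoothTransition.contDiff (n := 1)).differentiable one_ne_zero
    (2 * (T - (t + s) - k s / δ) / T)).hasDerivAt
  have hexp : HasDerivAt (fun s => Real.exp (-(κ / δ * k s)))
      (Real.exp (-(κ / δ * k s)) * -(κ / δ * k')) s := (hk.const_mul (κ / δ)).neg.exp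
  have harg : HasDerivAt (fun s => 2 * (T - (t + s) - k s / δ) / T)
      (2 * (-1 - k' / δ) / T) s :=
    (((((hasDerivAt_id s).const_add t).const_sub T).sub (hk.div_const δ)).const_mul 2).div_const T
  refine ⟨_, hexp.mul (HasDerivAt.comp (h₂ := Real.smoothTransition) s htransition harg), ?_⟩
  have hrate : 1 ≤ -(k' / δ) := by rw [← neg_div, le_div_iff₀ hδ]; linarith
  have hexp_growth : κ * Real.exp (-(κ / δ * k s))
      ≤ Real.exp (-(κ / δ * k s)) * -(κ / δ * k') := by
    rw [mul_comm κ]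
    refine mul_le_mul_of_nonneg_left ?_ (Real.exp_pos _).le
    calc κ ≤ κ * -(k' / δ) := le_mul_of_one_le_right hκ hrate
      _ = -(κ / δ * k') := by ring
  have htransition_growth : 0 ≤ Real.exp (-(κ / δ * k s)) *
      (deriv Real.smoothTransition (2 * (T - (t + s) - k s / δ) / T)
        * (2 * (-1 - k' / δ) / T)) :=
    mul_nonneg (Real.exp_pos _).le (mul_nonneg Real.smoothTransition.monotone.deriv_nonneg
      (div_nonneg (by linarith) hT.le))
  rw [carlemanFactor, ← mul_assoc]
  exact le_add_of_le_of_nonneg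
    (mul_le_mul_of_nonneg_right hexp_growth (Real.smoothTransition.nonneg _)) htransition_growth

variable {X : Type*}

/-- The weight of the energy estimate: the factor `carlemanFactor` at depth `k`, cut off at
distance `1 / N` from the boundary so that it is supported in a compact subset of `D`. -/
def exitWeight (k h : X → ℝ) (N κ δ T : ℝ) (q : X × ℝ) : ℝ :=
  cutoff N (h q.1) * cutoff N (k q.1) * carlemanFactor κ δ T (k q.1) q.2

/-- The part of the derivative of the cutoff in `exitWeight` that comes from the exit boundary
`k = 0`. It approximates the surface measure there as `N → ∞`. -/
def exitLayer (k h : X → ℝ) (N : ℝ) (x : X) : ℝ := cutoff N (h x) * deriv (cutoff N) (k x)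

variable {D : Set X} {k h : X → ℝ} {N : ℝ}

theorem exitLayer_nonneg (hN : 0 ≤ N) (x : X) : 0 ≤ exitLayer k h N x :=
  mul_nonneg (cutoff_nonneg _ _) (deriv_cutoff_nonneg hN _)

theorem exitWeight_nonneg (k h : X → ℝ) (N κ δ T : ℝ) (q : X × ℝ) :
    0 ≤ exitWeight k h N κ δ T q :=
  mul_nonneg (cutoff_mul_cutoff_mem_Icc N _ _).1 (carlemanFactor_nonneg _ _ _ _ _)

theorem exitWeight_le_zero_time (hT : 0 ≤ T) {x : X} {t : ℝ} (ht : 0 ≤ t) :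
    exitWeight k h N κ δ T (x, t) ≤ exitWeight k h N κ δ T (x, 0) :=
  mul_le_mul_of_nonneg_left (antitone_carlemanFactor hT (k x) ht)
    (cutoff_mul_cutoff_mem_Icc N _ _).1

theorem exists_mul_le_one_of_notMem_core (hN : 0 < N) {x : X}
    (hx : x ∈ D \ {x ∈ D | 1 / N ≤ k x ∧ 1 / N ≤ h x}) : N * h x ≤ 1 ∨ N * k x ≤ 1 := by
  by_contra! hlt
  exact hx.2 ⟨hx.1, (div_le_iff₀' hN).2 hlt.2.le, (div_le_iff₀' hN).2 hlt.1.le⟩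

theorem exitWeight_eq_zero (hN : 0 < N) {q : X × ℝ}
    (hq : q.1 ∈ D \ {x ∈ D | 1 / N ≤ k x ∧ 1 / N ≤ h x}) : exitWeight k h N κ δ T q = 0 := by
  rcases exists_mul_le_one_of_notMem_core hN hq with hh | hk
  · rw [exitWeight, cutoff_eq_zero hh, zero_mul, zero_mul]
  · rw [exitWeight, cutoff_eq_zero hk, mul_zero, zero_mul]

theorem exitLayer_eq_zero (hN : 0 < N) {x : X}
    (hx : x ∈ D \ {x ∈ D | 1 / N ≤ k x ∧ 1 / N ≤ h x}) : exitLayer k h N x = 0 := by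
  rcases exists_mul_le_one_of_notMem_core hN hx with hh | hk
  · rw [exitLayer, cutoff_eq_zero hh, zero_mul]
  · rw [exitLayer, deriv_cutoff_eq_zero_of_le hk, mul_zero]

end Weight

section ExitPair

variable {E : Type*} [NormedAddCommGroup E] [NormedSpace ℝ E]

/-- `k` measures the distance to the outflow part of the boundary of `D` and `h` the distance to
the remaining part: along `H`, the function `k` decreases at a definite rate, so that every
characteristic leaves `D` through `k = 0` before time `T / 2`, and `h` does not decrease. -/
structure IsExitPair (D : Set E) (H : E → E) (k h : E → ℝ) (T δ B : ℝ) : Prop where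
  isOpen : IsOpen D
  contDiffOn_field : ContDiffOn ℝ 1 H D
  contDiffOn_exit : ContDiffOn ℝ 1 k D
  contDiffOn_entry : ContDiffOn ℝ 1 h D
  exit_pos : ∀ x ∈ D, 0 < k x
  exit_le : ∀ x ∈ D, k x ≤ δ * T / 2
  fderiv_exit_le : ∀ x ∈ D, fderiv ℝ k x (H x) ≤ -δ
  neg_le_fderiv_exit : ∀ x ∈ D, -B ≤ fderiv ℝ k x (H x)
  fderiv_entry_nonneg : ∀ x ∈ D, 0 ≤ fderiv ℝ h x (H x)
  isCompact_core : ∀ σ > 0, IsCompact {x ∈ D | σ ≤ k x ∧ σ ≤ h x}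

variable {D : Set E} {H : E → E} {k h : E → ℝ} {T δ B N κ : ℝ}

namespace IsExitPair

theorem exitWeight_final (P : IsExitPair D H k h T δ B) (hT : 0 ≤ T) (hδ : 0 ≤ δ)
    {x : E} (hx : x ∈ D) : exitWeight k h N κ δ T (x, T) = 0 := by
  rw [exitWeight, carlemanFactor_final hT hδ (P.exit_pos x hx).le, mul_zero]

theorem cutoff_mul_exp_le_exitWeight_zero (P : IsExitPair D H k h T δ B) (hT : 0 < T)
    (hδ : 0 < δ) (hκ : 0 ≤ κ) {x : E} (hx : x ∈ D) :
    cutoff N (h x) * cutoff N (k x) * Real.exp (-(κ * T / 2))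
      ≤ exitWeight k h N κ δ T (x, 0) :=
  mul_le_mul_of_nonneg_left (exp_neg_le_carlemanFactor_zero hκ hδ hT (P.exit_le x hx))
    (cutoff_mul_cutoff_mem_Icc N _ _).1

theorem contDiffOn_exitWeight (P : IsExitPair D H k h T δ B) (s : Set ℝ) :
    ContDiffOn ℝ 1 (exitWeight k h N κ δ T) (D ×ˢ s) := by
  have hk : ContDiffOn ℝ 1 (fun q : E × ℝ => k q.1) (D ×ˢ s) :=
    P.contDiffOn_exit.comp contDiffOn_fst fun _ hq => hq.1
  have hh : ContDiffOn ℝ 1 (fun q : E × ℝ => h q.1) (D ×ˢ s) :=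
    P.contDiffOn_entry.comp contDiffOn_fst fun _ hq => hq.1
  exact (((contDiff_cutoff N).comp_contDiffOn hh).mul ((contDiff_cutoff N).comp_contDiffOn hk)).mul
    ((contDiff_carlemanFactor κ δ T).comp_contDiffOn (hk.prodMk contDiffOn_snd))

theorem continuousOn_exitWeight_zero_time (P : IsExitPair D H k h T δ B) :
    ContinuousOn (fun x => exitWeight k h N κ δ T (x, 0)) D :=
  (P.contDiffOn_exitWeight univ).continuousOn.comp (by fun_prop) fun _ hx => ⟨hx, mem_univ _⟩

theorem continuousOn_exitLayer (P : IsExitPair D H k h T δ B) : ContinuousOn (exitLayer k h N) D :=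
  ((contDiff_cutoff N).continuous.comp_continuousOn P.contDiffOn_entry.continuousOn).mul
    ((continuous_deriv_cutoff N).comp_continuousOn P.contDiffOn_exit.continuousOn)

theorem hasDerivAt_exit_along (P : IsExitPair D H k h T δ B) {x : E} (hx : x ∈ D) :
    HasDerivAt (fun s : ℝ => k (x + s • H x)) (fderiv ℝ k x (H x)) 0 :=
  ((P.contDiffOn_exit.differentiableOn one_ne_zero).differentiableAt
    (P.isOpen.mem_nhds hx)).hasFDerivAt.hasLineDerivAt (H x)

theorem hasDerivAt_entry_along (P : IsExitPair D H k h T δ B) {x : E} (hx : x ∈ D) :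
    HasDerivAt (fun s : ℝ => h (x + s • H x)) (fderiv ℝ h x (H x)) 0 :=
  ((P.contDiffOn_entry.differentiableOn one_ne_zero).differentiableAt
    (P.isOpen.mem_nhds hx)).hasFDerivAt.hasLineDerivAt (H x)

theorem exists_hasDerivAt_exitWeight_along (P : IsExitPair D H k h T δ B) (hT : 0 < T)
    (hδ : 0 < δ) (hN : 0 ≤ N) (hκ : 0 ≤ κ) (hB : 0 ≤ B) {x : E} (hx : x ∈ D) (t : ℝ) :
    ∃ W', HasDerivAt (fun s : ℝ => exitWeight k h N κ δ T (x + s • H x, t + s)) W' 0 ∧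
      κ * exitWeight k h N κ δ T (x, t) - B * exitLayer k h N x ≤ W' := by
  obtain ⟨g', hg, hgrowth⟩ := exists_hasDerivAt_carlemanFactor hκ hδ hT t
    (P.hasDerivAt_exit_along hx) (P.fderiv_exit_le x hx)
  have hentry := (hasDerivAt_cutoff N _).comp (0 : ℝ) (P.hasDerivAt_entry_along hx)
  have hexit := (hasDerivAt_cutoff N _).comp (0 : ℝ) (P.hasDerivAt_exit_along hx)
  refine ⟨_, (hentry.mul hexit).mul hg, ?_⟩
  simp only [Function.comp_apply, Pi.mul_apply, zero_smul, add_zero] at hgrowth ⊢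
  set g := carlemanFactor κ δ T (k x) t
  have hg0 : 0 ≤ g := carlemanFactor_nonneg _ _ _ _ _
  have hg1 : g ≤ 1 := carlemanFactor_le_one hκ hδ.le (P.exit_pos x hx).le t
  have hentry_growth : 0 ≤ deriv (cutoff N) (h x) * fderiv ℝ h x (H x) * cutoff N (k x) :=
    mul_nonneg (mul_nonneg (deriv_cutoff_nonneg hN _) (P.fderiv_entry_nonneg x hx))
      (cutoff_nonneg _ _)
  have hlayer := exitLayer_nonneg (k := k) (h := h) hN x
  have hexit_loss : -(B * exitLayer k h N x)
      ≤ cutoff N (h x) * (deriv (cutoff N) (k x) * fderiv ℝ k x (H x)) * g := by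
    rw [exitLayer] at hlayer ⊢
    nlinarith [mul_nonneg (mul_nonneg hlayer hg0) (neg_le_iff_add_nonneg.1
      (P.neg_le_fderiv_exit x hx)), mul_nonneg (mul_nonneg hB hlayer) (sub_nonneg.2 hg1)]
  calc κ * exitWeight k h N κ δ T (x, t) - B * exitLayer k h N x
      = -(B * exitLayer k h N x)
          + cutoff N (h x) * cutoff N (k x) * (κ * g) := by rw [exitWeight]; ring
    _ ≤ cutoff N (h x) * (deriv (cutoff N) (k x) * fderiv ℝ k x (H x)) * g
          + cutoff N (h x) * cutoff N (k x) * g' :=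
        add_le_add hexit_loss
          (mul_le_mul_of_nonneg_left hgrowth (cutoff_mul_cutoff_mem_Icc N _ _).1)
    _ ≤ _ := by linarith [mul_nonneg hentry_growth hg0]

theorem le_fderiv_exitWeight (P : IsExitPair D H k h T δ B) (hT : 0 < T)
    (hδ : 0 < δ) (hN : 0 ≤ N) (hκ : 0 ≤ κ) {x : E} (hx : x ∈ D) (t : ℝ) :
    κ * exitWeight k h N κ δ T (x, t) - B * exitLayer k h N x
      ≤ fderiv ℝ (exitWeight k h N κ δ T) (x, t) (H x, 1) := by
  have hB : 0 ≤ B := by linarith [P.fderiv_exit_le x hx, P.neg_le_fderiv_exit x hx]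
  obtain ⟨W', hW', hle⟩ := P.exists_hasDerivAt_exitWeight_along hT hδ hN hκ hB hx t
  have hdiff : DifferentiableAt ℝ (exitWeight k h N κ δ T) (x, t) :=
    ((P.contDiffOn_exitWeight univ).differentiableOn one_ne_zero).differentiableAt
      ((P.isOpen.prod isOpen_univ).mem_nhds ⟨hx, mem_univ _⟩)
  have hline : HasDerivAt (fun s : ℝ => exitWeight k h N κ δ T (x + s • H x, t + s))
      (fderiv ℝ (exitWeight k h N κ δ T) (x, t) (H x, 1)) 0 := by
    simpa only [HasLineDerivAt, Prod.smul_mk, smul_eq_mul, mul_one,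
      Prod.mk_add_mk] using
      hdiff.hasFDerivAt.hasLineDerivAt (H x, 1)
  exact hle.trans_eq (hW'.unique hline)

end IsExitPair

end ExitPair

section Energy

theorem ae_cylinder_of_ae {X : Type*} [MeasurableSpace X] {μ : Measure X} [SFinite μ] {D : Set X}
    {T : ℝ} {Q : X → Prop} (hQ : ∀ᵐ x ∂μ.restrict D, Q x) :
    ∀ᵐ q ∂(μ.prod volume).restrict (D ×ˢ Ioo 0 T), Q q.1 := by
  rw [← Measure.prod_restrict]
  exact Measure.quasiMeasurePreserving_fst.ae hQ

theorem neg_le_transport_density {Y Y' w w' w₀ p b F B M Λ m dv : ℝ} (hm : 0 < m)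
    (heq : Y' + p * Y = F) (hw' : (2 * M + Λ + m) * w - B * b ≤ w') (hp : |p| ≤ M)
    (hdv : |dv| ≤ Λ) (hw : 0 ≤ w) (hw₀ : w ≤ w₀) :
    -(1 / m * (F ^ 2 * w₀) + B * (b * Y ^ 2)) ≤ 2 * Y * Y' * w + Y ^ 2 * w' + Y ^ 2 * w * dv := by
  have hYw : 0 ≤ Y ^ 2 * w := mul_nonneg (sq_nonneg Y) hw
  have hyoung : -(1 / m * F ^ 2) ≤ 2 * Y * F + m * Y ^ 2 := by
    have hsq : 2 * Y * F + m * Y ^ 2 + 1 / m * F ^ 2 = 1 / m * (F + m * Y) ^ 2 := by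
      field_simp; ring
    have hsq_nonneg : 0 ≤ 1 / m * (F + m * Y) ^ 2 := by positivity
    linarith
  have hsource : 1 / m * F ^ 2 * w ≤ 1 / m * F ^ 2 * w₀ :=
    mul_le_mul_of_nonneg_left hw₀ (by positivity)
  calc -(1 / m * (F ^ 2 * w₀) + B * (b * Y ^ 2))
      ≤ -(1 / m * F ^ 2) * w - B * b * Y ^ 2 := by linarith
    _ ≤ (2 * Y * F + m * Y ^ 2) * w - B * b * Y ^ 2 := by
        linarith [mul_le_mul_of_nonneg_right hyoung hw]
    _ ≤ 2 * Y * (F - p * Y) * w + Y ^ 2 * ((2 * M + Λ + m) * w - B * b) + Y ^ 2 * w * dv := by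
        nlinarith [mul_nonneg hYw (sub_nonneg.2 (abs_le.1 hp).2),
          mul_nonneg hYw (neg_le_iff_add_nonneg.1 (abs_le.1 hdv).1)]
    _ ≤ 2 * Y * Y' * w + Y ^ 2 * w' + Y ^ 2 * w * dv := by
        rw [← heq, add_sub_cancel_right]
        linarith [mul_le_mul_of_nonneg_left hw' (sq_nonneg Y)]

variable {E : Type*} [NormedAddCommGroup E] [NormedSpace ℝ E]

/-- `y` is a `C¹` solution of `∂ₜy + H·∇y + p y = F` on `D × (0, T)` with `y(·, 0) = g`. The
differential operator is the derivative of `y` in the space-time direction `(H, 1)`. -/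
structure IsTransportSolution (D : Set E) (T : ℝ) (H : E → E) (p : E → ℝ) (F : E × ℝ → ℝ)
    (g : E → ℝ) (y : E × ℝ → ℝ) : Prop where
  contDiffOn : ContDiffOn ℝ 1 y (D ×ˢ Icc 0 T)
  fderiv_add_mul : ∀ q ∈ D ×ˢ Ioo 0 T, fderiv ℝ y q (H q.1, 1) + p q.1 * y q = F q
  initial : ∀ x ∈ D, y (x, 0) = g x

variable {D : Set E} {H : E → E} {k h : E → ℝ} {T δ B N κ M Λ m α V C : ℝ} {p f g : E → ℝ}
  {F v y : E × ℝ → ℝ}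

namespace IsExitPair

theorem neg_le_transport_sq_mul_exitWeight (P : IsExitPair D H k h T δ B) (hT : 0 < T)
    (hδ : 0 < δ) (hN : 0 ≤ N) (hm : 0 < m) (hy : IsTransportSolution D T H p F g y) {q : E × ℝ}
    (hq : q ∈ D ×ˢ Ioo 0 T) (hp : |p q.1| ≤ M) (hdiv : |divergence H q.1| ≤ Λ) :
    -(1 / m * (F q ^ 2 * exitWeight k h N (2 * M + Λ + m) δ T (q.1, 0))
        + B * (exitLayer k h N q.1 * y q ^ 2))
      ≤ fderiv ℝ (fun r => y r ^ 2 * exitWeight k h N (2 * M + Λ + m) δ T r) q (H q.1, 1)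
        + y q ^ 2 * exitWeight k h N (2 * M + Λ + m) δ T q * divergence H q.1 := by
  set W := exitWeight k h N (2 * M + Λ + m) δ T
  have hκ : 0 ≤ 2 * M + Λ + m := by linarith [abs_nonneg (p q.1), abs_nonneg (divergence H q.1)]
  have hderiv : fderiv ℝ (fun r => y r ^ 2 * W r) q (H q.1, 1)
      = 2 * y q * fderiv ℝ y q (H q.1, 1) * W q + y q ^ 2 * fderiv ℝ W q (H q.1, 1) := by
    have hW : HasFDerivAt W (fderiv ℝ W q) q :=
      hasFDerivAt_of_cylinder P.isOpen (P.contDiffOn_exitWeight _) hq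
    have hY : HasFDerivAt (fun r => y r ^ 2) _ q :=
      (hasFDerivAt_of_cylinder P.isOpen hy.contDiffOn hq).pow 2
    rw [(hY.fun_mul hW).fderiv]
    simp only [add_apply, smul_apply, smul_eq_mul, Nat.add_one_sub_one, pow_one]
    ring
  rw [hderiv]
  exact neg_le_transport_density hm (hy.fderiv_add_mul q hq)
    (P.le_fderiv_exitWeight hT hδ hN hκ hq.1 q.2) hp hdiv (exitWeight_nonneg _ _ _ _ _ _ _)
    (exitWeight_le_zero_time hT.le hq.2.1.le)

variable [MeasurableSpace E] [BorelSpace E] {μ : Measure E}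

theorem integrableOn_exitLayer_mul_sq [IsFiniteMeasureOnCompacts μ] [SFinite μ]
    (P : IsExitPair D H k h T δ B) (hN : 0 < N) (hy : ContinuousOn y (D ×ˢ Icc 0 T)) :
    IntegrableOn (fun q => exitLayer k h N q.1 * y q ^ 2) (D ×ˢ Ioo 0 T) (μ.prod volume) := by
  refine integrableOn_cylinder_of_eq_zero_off_compact P.isOpen
    (P.isCompact_core (1 / N) (by positivity)) ?_ fun q hq => by
      rw [exitLayer_eq_zero hN hq.1, zero_mul]
  exact ((P.continuousOn_exitLayer.comp continuousOn_fst fun _ hq => hq.1).mul (hy.pow 2)).mono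
    (prod_mono_left (sep_subset _ _))

theorem integrableOn_sq_mul_exitWeight [IsFiniteMeasureOnCompacts μ]
    (P : IsExitPair D H k h T δ B) (hN : 0 < N) (hfm : AEStronglyMeasurable f (μ.restrict D))
    (hfC : ∀ᵐ x ∂μ.restrict D, |f x| ≤ C) :
    IntegrableOn (fun x => f x ^ 2 * exitWeight k h N κ δ T (x, 0)) D μ := by
  refine (((P.continuousOn_exitWeight_zero_time.mono (sep_subset _ _)).integrableOn_compact
    (P.isCompact_core (1 / N) (by positivity))).of_forall_sdiff_eq_zero P.isOpen.measurableSet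
    fun x hx => exitWeight_eq_zero (q := (x, 0)) hN hx).bdd_mul (c := C ^ 2) (hfm.pow 2)
    (hfC.mono fun x hx => ?_)
  rw [norm_pow]
  exact pow_le_pow_left₀ (norm_nonneg _) hx 2

theorem integrableOn_source [IsFiniteMeasureOnCompacts μ] [SFinite μ]
    (P : IsExitPair D H k h T δ B) (hN : 0 < N)
    (hfm : AEStronglyMeasurable f (μ.restrict D)) (hfC : ∀ᵐ x ∂μ.restrict D, |f x| ≤ C)
    (hv : ContinuousOn v (D ×ˢ Icc 0 T)) :
    IntegrableOn (fun q => (f q.1 * v q) ^ 2 * exitWeight k h N κ δ T (q.1, 0))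
      (D ×ˢ Ioo 0 T) (μ.prod volume) := by
  have hvW : IntegrableOn (fun q => v q ^ 2 * exitWeight k h N κ δ T (q.1, 0))
      (D ×ˢ Ioo 0 T) (μ.prod volume) := by
    refine integrableOn_cylinder_of_eq_zero_off_compact P.isOpen
      (P.isCompact_core (1 / N) (by positivity)) ?_ fun q hq => by
        rw [exitWeight_eq_zero (q := (q.1, 0)) hN hq.1, mul_zero]
    exact ((hv.pow 2).mul (P.continuousOn_exitWeight_zero_time.comp continuousOn_fst
      fun _ hq => hq.1)).mono (prod_mono_left (sep_subset _ _))
  have hfm' : AEStronglyMeasurable (fun q : E × ℝ => f q.1 ^ 2)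
      ((μ.prod volume).restrict (D ×ˢ Ioo 0 T)) := by
    rw [← Measure.prod_restrict]
    exact (hfm.pow 2).comp_fst
  refine (hvW.bdd_mul (c := C ^ 2) hfm' ?_).congr (ae_of_all _ fun q => by simp only; ring)
  filter_upwards [ae_cylinder_of_ae hfC] with q hq
  rw [norm_pow]
  exact pow_le_pow_left₀ (norm_nonneg _) hq 2

theorem integral_source_le [IsFiniteMeasureOnCompacts μ] [SFinite μ]
    (P : IsExitPair D H k h T δ B) (hN : 0 < N)
    (hfm : AEStronglyMeasurable f (μ.restrict D)) (hfC : ∀ᵐ x ∂μ.restrict D, |f x| ≤ C)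
    (hv : ContinuousOn v (D ×ˢ Icc 0 T)) (hvV : ∀ x ∈ D, ∫ t in Ioo 0 T, v (x, t) ^ 2 ≤ V) :
    ∫ q in D ×ˢ Ioo 0 T, (f q.1 * v q) ^ 2 * exitWeight k h N κ δ T (q.1, 0) ∂(μ.prod volume)
      ≤ V * ∫ x in D, f x ^ 2 * exitWeight k h N κ δ T (x, 0) ∂μ := by
  have hint := P.integrableOn_source (μ := μ) (κ := κ) hN hfm hfC hv
  rw [setIntegral_prod _ hint, ← integral_const_mul]
  refine setIntegral_mono_on ?_ ((P.integrableOn_sq_mul_exitWeight hN hfm hfC).const_mul V)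
    P.isOpen.measurableSet fun x hx => ?_
  · rw [IntegrableOn, ← Measure.prod_restrict] at hint
    exact hint.integral_prod_left
  · calc ∫ t in Ioo 0 T, (f x * v (x, t)) ^ 2 * exitWeight k h N κ δ T (x, 0)
        = f x ^ 2 * exitWeight k h N κ δ T (x, 0) * ∫ t in Ioo 0 T, v (x, t) ^ 2 := by
          rw [← integral_const_mul]
          exact integral_congr_ae (ae_of_all _ fun t => by simp only; ring)
      _ ≤ f x ^ 2 * exitWeight k h N κ δ T (x, 0) * V :=
          mul_le_mul_of_nonneg_left (hvV x hx)
            (mul_nonneg (sq_nonneg _) (exitWeight_nonneg _ _ _ _ _ _ _))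
      _ = V * (f x ^ 2 * exitWeight k h N κ δ T (x, 0)) := mul_comm _ _

theorem le_integral_initial [IsFiniteMeasureOnCompacts μ] (P : IsExitPair D H k h T δ B)
    (hT : 0 ≤ T) (hN : 0 < N) (hy : IsTransportSolution D T H p F (fun x => f x * g x) y)
    (hfm : AEStronglyMeasurable f (μ.restrict D)) (hfC : ∀ᵐ x ∂μ.restrict D, |f x| ≤ C)
    (hg : ∀ x ∈ D, α ≤ g x ^ 2) :
    α * ∫ x in D, f x ^ 2 * exitWeight k h N κ δ T (x, 0) ∂μ
      ≤ ∫ x in D, (f x * g x) ^ 2 * exitWeight k h N κ δ T (x, 0) ∂μ := by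
  have hinitial : IntegrableOn (fun x => (f x * g x) ^ 2 * exitWeight k h N κ δ T (x, 0)) D μ := by
    refine IntegrableOn.congr_fun (f := fun x => y (x, 0) ^ 2 * exitWeight k h N κ δ T (x, 0)) ?_
      (fun x hx => by simp only [hy.initial x hx]) P.isOpen.measurableSet
    refine (ContinuousOn.integrableOn_compact (P.isCompact_core (1 / N) (by positivity))
      ?_).of_forall_sdiff_eq_zero P.isOpen.measurableSet fun x hx => by
        rw [exitWeight_eq_zero (q := (x, 0)) hN hx, mul_zero]
    refine ContinuousOn.mono ?_ (sep_subset _ _)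
    exact ((hy.contDiffOn.continuousOn.comp (by fun_prop) fun x hx =>
      ⟨hx, left_mem_Icc.2 hT⟩).pow 2).mul P.continuousOn_exitWeight_zero_time
  rw [← integral_const_mul]
  refine setIntegral_mono_on ((P.integrableOn_sq_mul_exitWeight hN hfm hfC).const_mul α) hinitial
    P.isOpen.measurableSet fun x hx => ?_
  rw [mul_pow, mul_right_comm, mul_comm α]
  exact mul_le_mul_of_nonneg_left (hg x hx)
    (mul_nonneg (sq_nonneg _) (exitWeight_nonneg _ _ _ _ _ _ _))

theorem integral_sq_mul_cutoff_le [IsFiniteMeasureOnCompacts μ] (P : IsExitPair D H k h T δ B)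
    (hT : 0 < T) (hδ : 0 < δ) (hN : 0 < N) (hκ : 0 ≤ κ)
    (hfm : AEStronglyMeasurable f (μ.restrict D)) (hfC : ∀ᵐ x ∂μ.restrict D, |f x| ≤ C) :
    ∫ x in D, f x ^ 2 * (cutoff N (h x) * cutoff N (k x)) ∂μ
      ≤ Real.exp (κ * T / 2) * ∫ x in D, f x ^ 2 * exitWeight k h N κ δ T (x, 0) ∂μ := by
  rw [← integral_const_mul]
  refine integral_mono_of_nonneg (ae_of_all _ fun x => mul_nonneg (sq_nonneg _)
      (cutoff_mul_cutoff_mem_Icc N _ _).1)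
    ((P.integrableOn_sq_mul_exitWeight hN hfm hfC).const_mul _) ?_
  filter_upwards [ae_restrict_mem P.isOpen.measurableSet] with x hx
  have hweight := mul_le_mul_of_nonneg_left
    (P.cutoff_mul_exp_le_exitWeight_zero (N := N) hT hδ hκ hx) (Real.exp_pos (κ * T / 2)).le
  rw [mul_left_comm, ← Real.exp_add, add_neg_cancel, Real.exp_zero, mul_one] at hweight
  exact (mul_le_mul_of_nonneg_left hweight (sq_nonneg _)).trans_eq (mul_left_comm _ _ _)

variable [FiniteDimensional ℝ E] [μ.IsAddHaarMeasure]

/-- Integrate `∂ₜ(y² W) + div (y² W H)` over the cylinder, where `W` is the exit weight. -/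
theorem weighted_energy_inequality (P : IsExitPair D H k h T δ B) (hT : 0 < T) (hδ : 0 < δ)
    (hN : 0 < N) (hm : 0 < m) (hy : IsTransportSolution D T H p F g y)
    (hp : ∀ᵐ x ∂μ.restrict D, |p x| ≤ M) (hdiv : ∀ x ∈ D, |divergence H x| ≤ Λ)
    (hF : IntegrableOn (fun q => F q ^ 2 * exitWeight k h N (2 * M + Λ + m) δ T (q.1, 0))
      (D ×ˢ Ioo 0 T) (μ.prod volume)) :
    ∫ x in D, g x ^ 2 * exitWeight k h N (2 * M + Λ + m) δ T (x, 0) ∂μ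
      ≤ 1 / m * ∫ q in D ×ˢ Ioo 0 T,
          F q ^ 2 * exitWeight k h N (2 * M + Λ + m) δ T (q.1, 0) ∂(μ.prod volume)
        + B * ∫ q in D ×ˢ Ioo 0 T, exitLayer k h N q.1 * y q ^ 2 ∂(μ.prod volume) := by
  set W := exitWeight k h N (2 * M + Λ + m) δ T
  obtain ⟨hint, htransport⟩ := integral_transport (μ := μ) (z := fun q => y q ^ 2 * W q) hT P.isOpen
    (P.isCompact_core (1 / N) (by positivity)) (sep_subset _ _)
    ((hy.contDiffOn.pow 2).mul (P.contDiffOn_exitWeight _))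
    (fun q hq => by simp only [W, exitWeight_eq_zero hN hq.1, mul_zero])
    (fun x hx => by simp only [W, P.exitWeight_final hT.le hδ.le hx, mul_zero]) P.contDiffOn_field
  have hlayer := P.integrableOn_exitLayer_mul_sq (μ := μ) hN hy.contDiffOn.continuousOn
  have hle := integral_mono_ae ((hF.const_mul (1 / m)).add (hlayer.const_mul B)).neg hint <| by
    filter_upwards [ae_cylinder_of_ae hp, ae_restrict_mem (P.isOpen.prod isOpen_Ioo).measurableSet]
      with q hpq hq
    exact P.neg_le_transport_sq_mul_exitWeight hT hδ hN.le hm hy hq hpq (hdiv q.1 hq.1)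
  have hinitial : ∫ x in D, y (x, 0) ^ 2 * W (x, 0) ∂μ = ∫ x in D, g x ^ 2 * W (x, 0) ∂μ :=
    setIntegral_congr_fun P.isOpen.measurableSet fun x hx => by simp only [hy.initial x hx]
  simp only [Pi.neg_apply, Pi.add_apply] at hle
  rw [htransport, integral_neg, integral_add (hF.const_mul _) (hlayer.const_mul _),
    integral_const_mul, integral_const_mul, neg_le_neg_iff, hinitial] at hle
  exact hle

/-- The growth rate surplus `m = 2V / α` lets half of the initial energy absorb the source. -/
theorem integral_sq_mul_exitWeight_le (P : IsExitPair D H k h T δ B) (hT : 0 < T)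
    (hδ : 0 < δ) (hN : 0 < N) (hα : 0 < α) (hV : 0 < V)
    (hy : IsTransportSolution D T H p (fun q => f q.1 * v q) (fun x => f x * g x) y)
    (hp : ∀ᵐ x ∂μ.restrict D, |p x| ≤ M) (hdiv : ∀ x ∈ D, |divergence H x| ≤ Λ)
    (hfm : AEStronglyMeasurable f (μ.restrict D)) (hfC : ∀ᵐ x ∂μ.restrict D, |f x| ≤ C)
    (hg : ∀ x ∈ D, α ≤ g x ^ 2)
    (hv : ContinuousOn v (D ×ˢ Icc 0 T)) (hvV : ∀ x ∈ D, ∫ t in Ioo 0 T, v (x, t) ^ 2 ≤ V) :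
    ∫ x in D, f x ^ 2 * exitWeight k h N (2 * M + Λ + 2 * V / α) δ T (x, 0) ∂μ
      ≤ 2 * B / α * ∫ q in D ×ˢ Ioo 0 T, exitLayer k h N q.1 * y q ^ 2 ∂(μ.prod volume) := by
  have hm : 0 < 2 * V / α := by positivity
  have hinitial := P.le_integral_initial (κ := 2 * M + Λ + 2 * V / α) hT.le hN hy hfm hfC hg
  have henergy := P.weighted_energy_inequality hT hδ hN hm hy hp hdiv
    (P.integrableOn_source hN hfm hfC hv)
  have hsource := mul_le_mul_of_nonneg_left (P.integral_source_le
    (κ := 2 * M + Λ + 2 * V / α) hN hfm hfC hv hvV) (one_div_pos.2 hm).le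
  have habsorb : 1 / (2 * V / α) * V = α / 2 := by field_simp
  rw [← mul_assoc, habsorb] at hsource
  rw [div_mul_eq_mul_div, le_div_iff₀ hα]
  linarith

theorem integral_sq_mul_cutoff_le_integral_exitLayer (P : IsExitPair D H k h T δ B) (hT : 0 < T)
    (hδ : 0 < δ) (hN : 0 < N) (hα : 0 < α) (hV : 0 < V) (hM : 0 ≤ M) (hΛ : 0 ≤ Λ)
    (hy : IsTransportSolution D T H p (fun q => f q.1 * v q) (fun x => f x * g x) y)
    (hp : ∀ᵐ x ∂μ.restrict D, |p x| ≤ M) (hdiv : ∀ x ∈ D, |divergence H x| ≤ Λ)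
    (hfm : AEStronglyMeasurable f (μ.restrict D)) (hfC : ∀ᵐ x ∂μ.restrict D, |f x| ≤ C)
    (hg : ∀ x ∈ D, α ≤ g x ^ 2)
    (hv : ContinuousOn v (D ×ˢ Icc 0 T)) (hvV : ∀ x ∈ D, ∫ t in Ioo 0 T, v (x, t) ^ 2 ≤ V) :
    ∫ x in D, f x ^ 2 * (cutoff N (h x) * cutoff N (k x)) ∂μ
      ≤ 2 * B / α * Real.exp ((2 * M + Λ + 2 * V / α) * T / 2)
        * ∫ x in D, exitLayer k h N x * (∫ t in Ioo 0 T, y (x, t) ^ 2) ∂μ := by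
  have hlayer := P.integrableOn_exitLayer_mul_sq (μ := μ) hN hy.contDiffOn.continuousOn
  simp only [← integral_const_mul (exitLayer k h N _)]
  rw [← setIntegral_prod _ hlayer, mul_comm (2 * B / α), mul_assoc]
  exact (P.integral_sq_mul_cutoff_le (κ := 2 * M + Λ + 2 * V / α) hT hδ hN (by positivity) hfm
    hfC).trans <| mul_le_mul_of_nonneg_left
      (P.integral_sq_mul_exitWeight_le hT hδ hN hα hV hy hp hdiv hfm hfC hg hv hvV)
      (Real.exp_pos _).le

end IsExitPair

end Energy

section TimeDerivative

open Filter Topology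

theorem hasDerivAt_add_smul {X : Type*} [NormedAddCommGroup X] [NormedSpace ℝ X] (x e : X)
    (s : ℝ) : HasDerivAt (fun s : ℝ => x + s • e) e s :=
  (((hasDerivAt_id s).smul_const e).const_add x).congr_deriv (one_smul ℝ e)

theorem tendsto_smul_sub_of_hasStrictFDerivAt {X F : Type*} [NormedAddCommGroup X]
    [NormedSpace ℝ X] [NormedAddCommGroup F] [NormedSpace ℝ F] {v : X → F} {v' : X →L[ℝ] F}
    {q : X} (hv : HasStrictFDerivAt v v' q) (a : X) :
    Tendsto (fun r : ℝ × X => r.1⁻¹ • (v (r.2 + r.1 • a) - v r.2)) (𝓝[≠] 0 ×ˢ 𝓝 q)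
      (𝓝 (v' a)) := by
  have hle : 𝓝[≠] (0 : ℝ) ×ˢ 𝓝 q ≤ 𝓝 (0, q) :=
    (Filter.prod_mono_left _ nhdsWithin_le_nhds).trans_eq nhds_prod_eq.symm
  have hpair : Tendsto (fun r : ℝ × X => (r.2 + r.1 • a, r.2)) (𝓝[≠] 0 ×ˢ 𝓝 q) (𝓝 (q, q)) := by
    have hcont : Continuous fun r : ℝ × X => (r.2 + r.1 • a, r.2) := by fun_prop
    simpa only [zero_smul, add_zero] using (hcont.tendsto (0, q)).mono_left hle
  have hlittle : (fun r : ℝ × X => v (r.2 + r.1 • a) - v r.2 - r.1 • v' a)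
      =o[𝓝[≠] 0 ×ˢ 𝓝 q] fun r => r.1 := by
    have hstrict := hv.isLittleO.comp_tendsto hpair
    simp only [Function.comp_def, add_sub_cancel_left, map_smul] at hstrict
    exact hstrict.trans_isBigO <| Asymptotics.IsBigO.of_bound ‖a‖ <| .of_forall fun r => by
      rw [norm_smul, mul_comm]
  have hne : ∀ᶠ r : ℝ × X in 𝓝[≠] 0 ×ˢ 𝓝 q, r.1 ≠ 0 := eventually_mem_nhdsWithin.prod_inl _
  refine ((hlittle.tendsto_inv_smul_nhds_zero.add_const (v' a)).congr' ?_).trans_eq ?_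
  · filter_upwards [hne] with r hr
    rw [smul_sub, inv_smul_smul₀ hr, sub_add_cancel]
  · rw [zero_add]

/-- Symmetry of mixed derivatives, with only one of the two assumed to exist. -/
theorem hasLineDerivAt_fderiv_apply {X F : Type*} [NormedAddCommGroup X] [NormedSpace ℝ X]
    [NormedAddCommGroup F] [NormedSpace ℝ F] {w v : X → F} {v' : X →L[ℝ] F} {a b q : X}
    (hw : ∀ᶠ r in 𝓝 q, DifferentiableAt ℝ w r) (hwv : ∀ᶠ r in 𝓝 q, fderiv ℝ w r b = v r)
    (hv : HasStrictFDerivAt v v' q) :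
    HasLineDerivAt ℝ (fun r => fderiv ℝ w r a) (v' a) q b := by
  have hline : Tendsto (fun s : ℝ => q + s • b) (𝓝 0) (𝓝 q) := by
    have hcont : Continuous fun s : ℝ => q + s • b := by fun_prop
    simpa only [zero_smul, add_zero] using hcont.tendsto 0
  have hshift : Tendsto (fun r : ℝ × ℝ => q + r.2 • b + r.1 • a) (𝓝[≠] 0 ×ˢ 𝓝 0) (𝓝 q) := by
    have hcont : Continuous fun r : ℝ × ℝ => q + r.2 • b + r.1 • a := by fun_prop
    have hle : 𝓝[≠] (0 : ℝ) ×ˢ 𝓝 (0 : ℝ) ≤ 𝓝 (0, 0) :=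
      (Filter.prod_mono_left _ nhdsWithin_le_nhds).trans_eq nhds_prod_eq.symm
    simpa only [zero_smul, add_zero] using (hcont.tendsto (0, 0)).mono_left hle
  have hpath {γ : ℝ → X} {s : ℝ} (hγ : HasDerivAt γ b s)
      (hr : DifferentiableAt ℝ w (γ s) ∧ fderiv ℝ w (γ s) b = v (γ s)) :
      HasDerivAt (fun s => w (γ s)) (v (γ s)) s :=
    hr.2 ▸ hr.1.hasFDerivAt.comp_hasDerivAt s hγ
  refine hasDerivAt_of_tendstoUniformlyOnFilter (l := 𝓝[≠] (0 : ℝ)) (g' := fun _ => v' a)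
    (f := fun ε s => ε⁻¹ • (w (q + s • b + ε • a) - w (q + s • b)))
    (f' := fun ε s => ε⁻¹ • (v (q + s • b + ε • a) - v (q + s • b))) ?_ ?_ ?_
  · exact tendstoUniformlyOnFilter_iff_tendsto.2 <| Uniform.tendsto_nhds_right.1 <|
      (tendsto_smul_sub_of_hasStrictFDerivAt hv a).comp (tendsto_id.prodMap hline)
  · filter_upwards [hshift.eventually (hw.and hwv), (hline.eventually (hw.and hwv)).prod_inr _]
      with r hmoved hr
    exact ((hpath ((hasDerivAt_add_smul q b r.2).add_const (r.1 • a)) hmoved).sub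
      (hpath (hasDerivAt_add_smul q b r.2) hr)).const_smul r.1⁻¹
  · filter_upwards [hline.eventually hw] with s hs
    exact (hs.hasFDerivAt.hasLineDerivAt a).tendsto_slope_zero

variable {E : Type*} [NormedAddCommGroup E] [NormedSpace ℝ E] {D : Set E} {T : ℝ} {H : E → E}
  {p g : E → ℝ} {F F' w v : E × ℝ → ℝ}

namespace IsTransportSolution

theorem fderivWithin_initial_space (hD : IsOpen D) (hT : 0 ≤ T)
    (hw : IsTransportSolution D T H p F 0 w) {x : E} (hx : x ∈ D) (e : E) :
    fderivWithin ℝ w (D ×ˢ Icc 0 T) (x, 0) (e, 0) = 0 := by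
  have h0 : (0 : ℝ) ∈ Icc 0 T := left_mem_Icc.2 hT
  have hmem : ∀ᶠ s : ℝ in 𝓝 0, x + s • e ∈ D :=
    (hasDerivAt_add_smul x e 0).continuousAt.eventually (hD.mem_nhds (by simpa using hx))
  have hderiv := ((hw.contDiffOn.differentiableOn one_ne_zero) (x, 0)
    ⟨hx, h0⟩).hasFDerivWithinAt.comp_hasDerivAt_of_eq (0 : ℝ)
      ((hasDerivAt_add_smul x e 0).prodMk (hasDerivAt_const 0 (0 : ℝ)))
      (hmem.mono fun s hs => ⟨hs, h0⟩) (by rw [zero_smul, add_zero])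
  exact hderiv.unique ((hasDerivAt_const _ _).congr_of_eventuallyEq
    (hmem.mono fun s hs => hw.initial _ hs))

theorem initial_time_deriv (hD : IsOpen D) (hT : 0 < T) (hw : IsTransportSolution D T H p F 0 w)
    (hv : ContDiffOn ℝ 1 v (D ×ˢ Icc 0 T)) (hwv : ∀ q ∈ D ×ˢ Ioo 0 T, fderiv ℝ w q (0, 1) = v q)
    {x : E} (hx : x ∈ D) (hF : ContinuousWithinAt (fun t => F (x, t)) (Ioo 0 T) 0) :
    v (x, 0) = F (x, 0) := by
  have hx0 : (x, (0 : ℝ)) ∈ D ×ˢ Icc 0 T := ⟨hx, left_mem_Icc.2 hT.le⟩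
  have hline : Tendsto (fun t : ℝ => (x, t)) (𝓝[Ioo 0 T] 0) (𝓝[D ×ˢ Icc 0 T] (x, 0)) :=
    tendsto_nhdsWithin_iff.2 ⟨((by fun_prop : Continuous fun t : ℝ => (x, t)).tendsto 0).mono_left
      nhdsWithin_le_nhds, eventually_mem_nhdsWithin.mono fun t ht => ⟨hx, Ioo_subset_Icc_self ht⟩⟩
  have hcont : ContinuousOn
      (fun q => v q + fderivWithin ℝ w (D ×ˢ Icc 0 T) q (H x, 0) + p x * w q) (D ×ˢ Icc 0 T) :=
    (hv.continuousOn.add ((hw.contDiffOn.continuousOn_fderivWithin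
      (hD.uniqueDiffOn.prod (uniqueDiffOn_Icc hT)) le_rfl).clm_apply continuousOn_const)).add
      (continuousOn_const.mul hw.contDiffOn.continuousOn)
  have hlimit := (hcont (x, 0) hx0).tendsto.comp hline
  simp only [hw.fderivWithin_initial_space hD hT.le hx, hw.initial x hx, Pi.zero_apply, mul_zero,
    add_zero] at hlimit
  have := left_nhdsWithin_Ioo_neBot hT
  refine tendsto_nhds_unique hlimit (hF.tendsto.congr' ?_)
  filter_upwards [self_mem_nhdsWithin] with t ht
  have hq : (x, t) ∈ D ×ˢ Ioo 0 T := ⟨hx, ht⟩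
  simp only [Function.comp_apply]
  rw [fderivWithin_of_mem_nhds (cylinder_mem_nhds hD hq), ← hwv _ hq, ← map_add, Prod.mk_add_mk,
    zero_add, add_zero]
  exact (hw.fderiv_add_mul _ hq).symm

theorem fderiv_time_deriv (hD : IsOpen D) (hw : IsTransportSolution D T H p F g w)
    (hv : ContDiffOn ℝ 1 v (D ×ˢ Icc 0 T)) (hwv : ∀ q ∈ D ×ˢ Ioo 0 T, fderiv ℝ w q (0, 1) = v q)
    {q : E × ℝ} (hq : q ∈ D ×ˢ Ioo 0 T) {c : ℝ} (hF : HasDerivAt (fun t => F (q.1, t)) c q.2) :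
    fderiv ℝ v q (H q.1, 1) + p q.1 * v q = c := by
  obtain ⟨x, t⟩ := q
  have hmem := (hD.prod isOpen_Ioo).mem_nhds hq
  have hmixed := hasLineDerivAt_fderiv_apply (w := w) (a := (H x, 1)) (b := (0, 1))
    (eventually_of_mem hmem fun r hr =>
      (hasFDerivAt_of_cylinder hD hw.contDiffOn hr).differentiableAt)
    (eventually_of_mem hmem hwv)
    ((hv.contDiffAt (cylinder_mem_nhds hD hq)).hasStrictFDerivAt one_ne_zero)
  have hvalue := (hasFDerivAt_of_cylinder hD hw.contDiffOn hq).hasLineDerivAt (0, 1)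
  have hsource : HasDerivAt (fun s => F (x, t + s)) c 0 :=
    HasDerivAt.comp_const_add t 0 (by rwa [add_zero])
  have hline : Tendsto (fun s : ℝ => (x, t) + s • (0, 1)) (𝓝 0) (𝓝 (x, t)) := by
    simpa only [zero_smul, add_zero] using (hasDerivAt_add_smul (x, t) ((0 : E), (1 : ℝ))
      0).continuousAt.tendsto
  rw [← hwv _ hq]
  refine ((hmixed.add (hvalue.const_mul (p x))).congr_of_eventuallyEq ?_).unique hsource
  filter_upwards [hline.eventually hmem] with s hs
  simpa using (hw.fderiv_add_mul _ hs).symm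

theorem time_deriv (hD : IsOpen D) (hT : 0 < T) (hw : IsTransportSolution D T H p F 0 w)
    (hv : ContDiffOn ℝ 1 v (D ×ˢ Icc 0 T)) (hwv : ∀ q ∈ D ×ˢ Ioo 0 T, fderiv ℝ w q (0, 1) = v q)
    (hF : ∀ x ∈ D, ContinuousWithinAt (fun t => F (x, t)) (Ioo 0 T) 0)
    (hF' : ∀ q ∈ D ×ˢ Ioo 0 T, HasDerivAt (fun t => F (q.1, t)) (F' q) q.2) :
    IsTransportSolution D T H p F' (fun x => F (x, 0)) v where
  contDiffOn := hv
  fderiv_add_mul q hq := hw.fderiv_time_deriv hD hv hwv hq (hF' q hq)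
  initial x hx := hw.initial_time_deriv hD hT hv hwv hx (hF x hx)

end IsTransportSolution

end TimeDerivative

section Supremum

variable {X : Type*} [PseudoMetricSpace X] {z : X × ℝ → ℝ} {K D : Set X} {J : Set ℝ}

theorem bddAbove_range_abs_slice (hK : IsCompact K) (hDK : D ⊆ K) {t : ℝ} (ht : t ∈ J)
    (hz : ContinuousOn z (K ×ˢ J)) : BddAbove (range fun x : D => |z (x, t)|) := by
  obtain ⟨R, hR⟩ := hK.exists_bound_of_continuousOn
    (hz.comp (f := fun x => (x, t)) (by fun_prop) fun x hx => ⟨hx, ht⟩)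
  exact ⟨R, forall_mem_range.2 fun x => hR x (hDK x.2)⟩

theorem continuousOn_iSup_abs (hK : IsCompact K) (hJ : IsCompact J) (hDK : D ⊆ K)
    (hz : ContinuousOn z (K ×ˢ J)) : ContinuousOn (fun t => ⨆ x : D, |z (x, t)|) J := by
  obtain hD | hD := isEmpty_or_nonempty D
  · simp only [Real.iSup_of_isEmpty, continuousOn_const]
  refine Metric.continuousOn_iff.2 fun t ht ε hε => ?_
  obtain ⟨δ, hδ, hunif⟩ := Metric.uniformContinuousOn_iff.1
    ((hK.prod hJ).uniformContinuousOn_of_continuous hz) (ε / 2) (half_pos hε)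
  have hle : ∀ r ∈ J, ∀ s ∈ J, dist r s < δ →
      (⨆ x : D, |z (x, r)|) ≤ (⨆ x : D, |z (x, s)|) + ε / 2 := by
    refine fun r hr s hs hrs => ciSup_le fun x => ?_
    have hclose : |z (x, r) - z (x, s)| < ε / 2 :=
      hunif (x, r) ⟨hDK x.2, hr⟩ (x, s) ⟨hDK x.2, hs⟩ (by simpa [Prod.dist_eq] using hrs)
    have hsup := le_ciSup (bddAbove_range_abs_slice hK hDK hs hz) x
    linarith [abs_sub_abs_le_abs_sub (z (x, r)) (z (x, s))]
  refine ⟨δ, hδ, fun s hs hst => ?_⟩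
  rw [Real.dist_eq, abs_lt]
  constructor <;> linarith [hle s hs t ht hst, hle t ht s hs (by rwa [dist_comm])]

theorem setIntegral_sq_le_setIntegral_iSup_sq (hK : IsCompact K) (hJ : IsCompact J) (hDK : D ⊆ K)
    (hz : ContinuousOn z (K ×ˢ J)) {x : X} (hx : x ∈ D) {μ : Measure ℝ}
    [IsFiniteMeasureOnCompacts μ] :
    ∫ t in J, z (x, t) ^ 2 ∂μ ≤ ∫ t in J, (⨆ y : D, |z (y, t)|) ^ 2 ∂μ := by
  have hzx : ContinuousOn (fun t => z (x, t)) J :=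
    hz.comp (by fun_prop) fun t ht => ⟨hDK hx, ht⟩
  refine setIntegral_mono_on ((hzx.pow 2).integrableOn_compact hJ)
    (((continuousOn_iSup_abs hK hJ hDK hz).pow 2).integrableOn_compact hJ) hJ.measurableSet
    fun t ht => ?_
  rw [← sq_abs]
  exact pow_le_pow_left₀ (abs_nonneg _)
    (le_ciSup (bddAbove_range_abs_slice hK hDK ht hz) ⟨x, hx⟩) 2

end Supremum

section GraphCoordinates

variable {d : ℕ}

variable (d) in
/-- The horizontal coordinates `x'` of a point `(x', xₙ)`. -/
def horizontal : Esp (d + 1) →L[ℝ] Esp d :=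
  (EuclideanSpace.equiv (Fin d) ℝ).symm.toContinuousLinearMap.comp
    (ContinuousLinearMap.pi fun i : Fin d => EuclideanSpace.proj (𝕜 := ℝ) i.castSucc)

variable (d) in
/-- The vertical coordinate `xₙ` of a point `(x', xₙ)`. -/
def vertical : Esp (d + 1) →L[ℝ] ℝ := EuclideanSpace.proj (𝕜 := ℝ) (Fin.last d)

@[simp] theorem horizontal_apply (x : Esp (d + 1)) (i : Fin d) :
    horizontal d x i = x i.castSucc := rfl

theorem vertical_apply (x : Esp (d + 1)) : vertical d x = x (Fin.last d) := rfl

@[simp] theorem graphMk_castSucc (x' : Esp d) (s : ℝ) (i : Fin d) :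
    graphMk d x' s i.castSucc = x' i :=
  Fin.snoc_castSucc (α := fun _ => ℝ) _ _ _

@[simp] theorem graphMk_last (x' : Esp d) (s : ℝ) : graphMk d x' s (Fin.last d) = s :=
  Fin.snoc_last (α := fun _ => ℝ) _ _

@[simp] theorem horizontal_graphMk (x' : Esp d) (s : ℝ) : horizontal d (graphMk d x' s) = x' := by
  ext i; simp

@[simp] theorem vertical_graphMk (x' : Esp d) (s : ℝ) : vertical d (graphMk d x' s) = s := by
  simp [vertical_apply]

@[simp] theorem graphMk_horizontal_vertical (x : Esp (d + 1)) :
    graphMk d (horizontal d x) (vertical d x) = x := by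
  ext i
  refine Fin.lastCases ?_ (fun i => ?_) i <;> simp [vertical_apply]

theorem graphMk_zero : graphMk d 0 0 = 0 := by
  simpa using graphMk_horizontal_vertical (0 : Esp (d + 1))

theorem inner_graphMk (z : Esp (d + 1)) (x' : Esp d) (s : ℝ) :
    ⟪z, graphMk d x' s⟫ = ⟪horizontal d z, x'⟫ + vertical d z * s := by
  simp [PiLp.inner_apply, Fin.sum_univ_castSucc, vertical_apply, mul_comm]

theorem dist_graphMk (x' : Esp d) (s r : ℝ) :
    dist (graphMk d x' s) (graphMk d x' r) = dist s r := by
  simp [EuclideanSpace.dist_eq, Fin.sum_univ_castSucc]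

theorem continuous_graphMk : Continuous fun q : Esp d × ℝ => graphMk d q.1 q.2 := by
  refine (EuclideanSpace.equiv (Fin (d + 1)) ℝ).symm.continuous.comp (continuous_pi fun i => ?_)
  refine Fin.lastCases ?_ (fun i => ?_) i
  · simp only [Fin.snoc_last]; fun_prop
  · simp only [Fin.snoc_castSucc]; fun_prop

variable (d) in
/-- The identification `ℝ^d × ℝ ≃ ℝ^{d+1}` underlying `graphMk`, as a homeomorphism. -/
def graphHomeomorph : Esp d × ℝ ≃ₜ Esp (d + 1) where
  toFun q := graphMk d q.1 q.2
  invFun x := (horizontal d x, vertical d x)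
  left_inv q := by simp
  right_inv x := by simp
  continuous_toFun := continuous_graphMk
  continuous_invFun := by fun_prop

theorem measurePreserving_graphHomeomorph :
    MeasurePreserving (graphHomeomorph d) (volume.prod volume) volume := by
  have forget_head := EuclideanSpace.volume_preserving_symm_measurableEquiv_toLp (Fin d)
  have insert_last :=
    (volume_preserving_piFinSuccAbove (fun _ : Fin (d + 1) => ℝ) (Fin.last d)).symm
  have remember := (EuclideanSpace.volume_preserving_symm_measurableEquiv_toLp (Fin (d + 1))).symm
  have composite := (remember.comp
    (insert_last.comp ((MeasurePreserving.id (volume : Measure ℝ)).prod forget_head))).comp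
      (Measure.measurePreserving_swap (μ := (volume : Measure (Esp d))))
  refine (congrArg (MeasurePreserving · _ _) (funext fun q => ?_)).mpr composite
  ext i
  refine Fin.lastCases ?_ (fun i => ?_) i <;>
    simp [graphHomeomorph, MeasurableEquiv.piFinSuccAbove]

/-- The depth of a point below the graph of `ℓ`. -/
def graphDepth (ℓ : Esp d → ℝ) (x : Esp (d + 1)) : ℝ := ℓ (horizontal d x) - vertical d x

/-- The height of a point above the lower boundary `xₙ = ℓ(x') - ℓt(x')` of `graphDomain`. -/
def graphHeight (ℓ ℓt : Esp d → ℝ) (x : Esp (d + 1)) : ℝ :=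
  ℓt (horizontal d x) - graphDepth ℓ x

@[simp] theorem graphDepth_graphMk (ℓ : Esp d → ℝ) (x' : Esp d) (s : ℝ) :
    graphDepth ℓ (graphMk d x' s) = ℓ x' - s := by
  simp [graphDepth]

theorem graphMk_horizontal_sub_graphDepth (ℓ : Esp d → ℝ) (x : Esp (d + 1)) :
    graphMk d (horizontal d x) (ℓ (horizontal d x) - graphDepth ℓ x) = x := by
  rw [graphDepth, sub_sub_cancel, graphMk_horizontal_vertical]

theorem mem_graphDomain {ℓ ℓt : Esp d → ℝ} {r : ℝ} {x : Esp (d + 1)} :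
    x ∈ graphDomain d r ℓ ℓt ↔
      ‖horizontal d x‖ < r ∧ 0 < graphDepth ℓ x ∧ 0 < graphHeight ℓ ℓt x := by
  constructor
  · rintro ⟨x', s, hx', hlower, hupper, rfl⟩
    simp only [graphHeight, horizontal_graphMk, graphDepth_graphMk]
    exact ⟨hx', by linarith, by linarith⟩
  · rintro ⟨hx', hdepth, hheight⟩
    refine ⟨_, _, hx', ?_, ?_, (graphMk_horizontal_vertical x).symm⟩ <;>
      simp only [graphHeight, graphDepth] at hdepth hheight <;> linarith

theorem measurePreserving_graphDepth {ℓ : Esp d → ℝ} (hℓ : Measurable ℓ) :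
    MeasurePreserving (fun x : Esp (d + 1) => (horizontal d x, graphDepth ℓ x)) volume
      (volume.prod volume) := by
  have split : MeasurePreserving (graphHomeomorph d).symm volume (volume.prod volume) :=
    MeasurePreserving.symm (graphHomeomorph d).toMeasurableEquiv measurePreserving_graphHomeomorph
  have flip : MeasurePreserving (fun q : Esp d × ℝ => (id q.1, ℓ q.1 - q.2))
      (volume.prod volume) (volume.prod volume) :=
    (MeasurePreserving.id _).skew_product (g := fun x' s => ℓ x' - s)
      (by unfold Function.uncurry; fun_prop)
      (Filter.Eventually.of_forall fun x' => (volume.measurePreserving_sub_left (ℓ x')).map_eq)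
  exact flip.comp split

theorem graphMk_mem_closure {S : Set (Esp (d + 1))} {x' : Esp d} {s b : ℝ} (hb : 0 < b)
    (hS : ∀ r ∈ Ioo 0 b, graphMk d x' (s - r) ∈ S) : graphMk d x' s ∈ closure S := by
  have hcont : Continuous fun r : ℝ => graphMk d x' (s - r) :=
    continuous_graphMk.comp (f := fun r : ℝ => (x', s - r)) (by fun_prop)
  have hlim := (hcont.tendsto 0).mono_left (nhdsWithin_le_nhds (s := Ioi (0 : ℝ)))
  rw [sub_zero] at hlim
  exact mem_closure_of_tendsto hlim (Filter.mem_of_superset (Ioo_mem_nhdsGT hb) hS)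

end GraphCoordinates

section GraphGeometry

open Filter Topology

section Bump

variable {F : Type*} [NormedAddCommGroup F] {r : ℝ} {x' : F}

/-- The thickness profile of the thin domains: it vanishes to second order on the sphere of
radius `r` and has size and gradient tending to `0` with `r`. -/
def bump (r : ℝ) (x' : F) : ℝ := (r ^ 2 - ‖x'‖ ^ 2) ^ 2

theorem bump_pos (hx : ‖x'‖ < r) : 0 < bump r x' :=
  pow_pos (sub_pos.2 (pow_lt_pow_left₀ hx (norm_nonneg x') two_ne_zero)) 2

theorem bump_le (hx : ‖x'‖ ≤ r) : bump r x' ≤ r ^ 4 := by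
  have hsq : ‖x'‖ ^ 2 ≤ r ^ 2 := pow_le_pow_left₀ (norm_nonneg x') hx 2
  calc bump r x' ≤ (r ^ 2) ^ 2 :=
        pow_le_pow_left₀ (sub_nonneg.2 hsq) (sub_le_self _ (sq_nonneg _)) 2
    _ = r ^ 4 := by ring

theorem bump_of_norm_eq (hx : ‖x'‖ = r) : bump r x' = 0 := by simp [bump, hx]

variable [InnerProductSpace ℝ F]

theorem contDiff_bump (r : ℝ) {n : WithTop ℕ∞} : ContDiff ℝ n (bump (F := F) r) :=
  (contDiff_const.sub (contDiff_norm_sq ℝ)).pow 2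

theorem fderiv_bump (r : ℝ) (x' : F) :
    fderiv ℝ (bump r) x' = (-(4 * (r ^ 2 - ‖x'‖ ^ 2))) • innerSL ℝ x' := by
  refine HasFDerivAt.fderiv ((((hasStrictFDerivAt_norm_sq x').hasFDerivAt.const_sub
    (r ^ 2)).pow 2).congr_fderiv ?_)
  ext e
  simp only [smul_apply, neg_apply, innerSL_apply_apply, smul_eq_mul, nsmul_eq_mul]
  push_cast
  ring

theorem gradient_bump_of_norm_eq [CompleteSpace F] (hx : ‖x'‖ = r) :
    gradient (bump r) x' = 0 := by
  simp [gradient, fderiv_bump, hx]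

theorem abs_fderiv_bump_apply_le (hx : ‖x'‖ ≤ r) (e : F) :
    |fderiv ℝ (bump r) x' e| ≤ 4 * r ^ 3 * ‖e‖ := by
  have hr : 0 ≤ r := (norm_nonneg x').trans hx
  have hsq : 0 ≤ r ^ 2 - ‖x'‖ ^ 2 := sub_nonneg.2 (pow_le_pow_left₀ (norm_nonneg x') hx 2)
  have hinner : |⟪x', e⟫| ≤ r * ‖e‖ := (abs_real_inner_le_norm x' e).trans
    (mul_le_mul_of_nonneg_right hx (norm_nonneg e))
  calc |fderiv ℝ (bump r) x' e| = 4 * (r ^ 2 - ‖x'‖ ^ 2) * |⟪x', e⟫| := by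
        rw [fderiv_bump, smul_apply, smul_eq_mul, abs_mul, abs_neg, abs_of_nonneg (by positivity),
          innerSL_apply_apply]
    _ ≤ 4 * r ^ 2 * (r * ‖e‖) := by
        gcongr
        exact sub_le_self _ (sq_nonneg _)
    _ = 4 * r ^ 3 * ‖e‖ := by ring

end Bump

variable {d : ℕ} {ℓ ℓt : Esp d → ℝ} {r : ℝ} {n : WithTop ℕ∞}

theorem contDiffOn_graphDepth (hℓ : ContDiffOn ℝ n ℓ (closedBall 0 r)) :
    ContDiffOn ℝ n (graphDepth ℓ) (horizontal d ⁻¹' closedBall 0 r) :=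
  (hℓ.comp (horizontal d).contDiff.contDiffOn fun _ hx => hx).sub
    (vertical d).contDiff.contDiffOn

theorem contDiffOn_graphHeight (hℓ : ContDiffOn ℝ n ℓ (closedBall 0 r))
    (hℓt : ContDiffOn ℝ n ℓt (closedBall 0 r)) :
    ContDiffOn ℝ n (graphHeight ℓ ℓt) (horizontal d ⁻¹' closedBall 0 r) :=
  (hℓt.comp (horizontal d).contDiff.contDiffOn fun _ hx => hx).sub (contDiffOn_graphDepth hℓ)

theorem graphDomain_subset_preimage_ball :
    graphDomain d r ℓ ℓt ⊆ horizontal d ⁻¹' ball 0 r :=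
  fun _ hx => mem_ball_zero_iff.2 (mem_graphDomain.1 hx).1

theorem isOpen_graphDomain (hℓ : ContinuousOn ℓ (ball 0 r)) (hℓt : ContinuousOn ℓt (ball 0 r)) :
    IsOpen (graphDomain d r ℓ ℓt) := by
  have hcyl : IsOpen (horizontal d ⁻¹' ball 0 r) := isOpen_ball.preimage (horizontal d).continuous
  have hmaps : MapsTo (horizontal d) (horizontal d ⁻¹' ball 0 r) (ball 0 r) := fun _ hx => hx
  have hdepth : ContinuousOn (graphDepth ℓ) (horizontal d ⁻¹' ball 0 r) :=
    (hℓ.comp (horizontal d).continuous.continuousOn hmaps).sub (vertical d).continuous.continuousOn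
  have hheight : ContinuousOn (graphHeight ℓ ℓt) (horizontal d ⁻¹' ball 0 r) :=
    (hℓt.comp (horizontal d).continuous.continuousOn hmaps).sub hdepth
  have hset : graphDomain d r ℓ ℓt = (horizontal d ⁻¹' ball 0 r ∩ graphDepth ℓ ⁻¹' Ioi 0) ∩
      (horizontal d ⁻¹' ball 0 r ∩ graphHeight ℓ ℓt ⁻¹' Ioi 0) := by
    ext x
    simp only [mem_graphDomain, mem_inter_iff, mem_preimage, mem_ball_zero_iff, mem_Ioi]
    tauto
  rw [hset]
  exact (hdepth.isOpen_inter_preimage hcyl isOpen_Ioi).inter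
    (hheight.isOpen_inter_preimage hcyl isOpen_Ioi)

theorem isCompact_graphDomain_core (hb : Bornology.IsBounded (graphDomain d r ℓ ℓt))
    (hℓ : ContinuousOn ℓ (closedBall 0 r)) (hℓt : ContinuousOn ℓt (closedBall 0 r))
    (hℓt0 : ∀ x', ‖x'‖ = r → ℓt x' = 0) {σ : ℝ} (hσ : 0 < σ) :
    IsCompact {x ∈ graphDomain d r ℓ ℓt | σ ≤ graphDepth ℓ x ∧ σ ≤ graphHeight ℓ ℓt x} := by
  refine isCompact_of_isClosed_isBounded ?_ (hb.subset fun x hx => hx.1)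
  have hcyl : IsClosed (horizontal d ⁻¹' closedBall 0 r) :=
    isClosed_closedBall.preimage (horizontal d).continuous
  have hdepth := (contDiffOn_graphDepth (contDiffOn_zero.2 hℓ)).continuousOn
  have hheight :=
    (contDiffOn_graphHeight (contDiffOn_zero.2 hℓ) (contDiffOn_zero.2 hℓt)).continuousOn
  convert (hdepth.preimage_isClosed_of_isClosed hcyl (isClosed_Ici (a := σ))).inter
    (hheight.preimage_isClosed_of_isClosed hcyl (isClosed_Ici (a := σ))) using 1
  ext x
  simp only [mem_ofPred_eq, mem_graphDomain, mem_inter_iff, mem_preimage, mem_Ici,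
    mem_closedBall_zero_iff]
  constructor
  · rintro ⟨⟨hx, -, -⟩, hd, hh⟩
    exact ⟨⟨hx.le, hd⟩, hx.le, hh⟩
  · rintro ⟨⟨hx, hd⟩, -, hh⟩
    refine ⟨⟨hx.lt_of_ne fun heq => ?_, hσ.trans_le hd, hσ.trans_le hh⟩, hd, hh⟩
    rw [graphHeight, hℓt0 _ heq] at hh
    linarith

theorem hasFDerivAt_graphDepth {x : Esp (d + 1)} (hℓ : DifferentiableAt ℝ ℓ (horizontal d x)) :
    HasFDerivAt (graphDepth ℓ) (fderiv ℝ ℓ (horizontal d x) ∘L horizontal d - vertical d) x :=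
  (hℓ.hasFDerivAt.comp x (horizontal d).hasFDerivAt).sub (vertical d).hasFDerivAt

theorem fderiv_graphHeight {x : Esp (d + 1)} (hℓ : DifferentiableAt ℝ ℓ (horizontal d x))
    (hℓt : DifferentiableAt ℝ ℓt (horizontal d x)) :
    fderiv ℝ (graphHeight ℓ ℓt) x
      = fderiv ℝ ℓt (horizontal d x) ∘L horizontal d - fderiv ℝ (graphDepth ℓ) x := by
  rw [(hasFDerivAt_graphDepth hℓ).fderiv]
  exact ((hℓt.hasFDerivAt.comp x (horizontal d).hasFDerivAt).sub
    (hasFDerivAt_graphDepth hℓ)).fderiv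

theorem fderiv_graphDepth_apply_eq_inner_nuUp {x : Esp (d + 1)}
    (hℓ : DifferentiableAt ℝ ℓ (horizontal d x)) (z : Esp (d + 1)) :
    fderiv ℝ (graphDepth ℓ) x z
      = -(omegaW d ℓ (horizontal d x) * ⟪z, nuUp d ℓ (horizontal d x)⟫) := by
  have hω : Real.sqrt (1 + ‖gradient ℓ (horizontal d x)‖ ^ 2) ≠ 0 := by positivity
  have hgrad : ⟪horizontal d z, gradient ℓ (horizontal d x)⟫
      = fderiv ℝ ℓ (horizontal d x) (horizontal d z) := by
    rw [inner_gradient_right, conj_trivial]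
  rw [(hasFDerivAt_graphDepth hℓ).fderiv, nuUp, omegaW, inner_smul_right, mul_inv_cancel_left₀ hω,
    inner_graphMk, inner_neg_right, hgrad, mul_one, neg_add, neg_neg, ← sub_eq_add_neg]
  rfl

theorem isExitPair_graphDomain {H : Esp (d + 1) → Esp (d + 1)} {T δ B : ℝ}
    (hb : Bornology.IsBounded (graphDomain d r ℓ ℓt))
    (hH : ContDiffOn ℝ 1 H (graphDomain d r ℓ ℓt))
    (hℓ : ContDiffOn ℝ 1 ℓ (closedBall 0 r)) (hℓt : ContDiffOn ℝ 1 ℓt (closedBall 0 r))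
    (hℓt0 : ∀ x', ‖x'‖ = r → ℓt x' = 0) (hthin : ∀ x', ‖x'‖ < r → ℓt x' ≤ δ * T / 2)
    (hexit : ∀ x ∈ graphDomain d r ℓ ℓt, fderiv ℝ (graphDepth ℓ) x (H x) ∈ Icc (-B) (-δ))
    (hentry : ∀ x ∈ graphDomain d r ℓ ℓt,
      -δ ≤ fderiv ℝ ℓt (horizontal d x) (horizontal d (H x))) :
    IsExitPair (graphDomain d r ℓ ℓt) H (graphDepth ℓ) (graphHeight ℓ ℓt) T δ B := by
  have hcyl : graphDomain d r ℓ ℓt ⊆ horizontal d ⁻¹' closedBall 0 r :=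
    graphDomain_subset_preimage_ball.trans (preimage_mono ball_subset_closedBall)
  have hdiff : ∀ {m : Esp d → ℝ}, ContDiffOn ℝ 1 m (closedBall 0 r) →
      ∀ x ∈ graphDomain d r ℓ ℓt, DifferentiableAt ℝ m (horizontal d x) := fun hm x hx =>
    (hm.differentiableOn one_ne_zero).differentiableAt (mem_of_superset
      (isOpen_ball.mem_nhds (graphDomain_subset_preimage_ball hx)) ball_subset_closedBall)
  exact
    { isOpen := isOpen_graphDomain (hℓ.continuousOn.mono ball_subset_closedBall)
        (hℓt.continuousOn.mono ball_subset_closedBall)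
      contDiffOn_field := hH
      contDiffOn_exit := (contDiffOn_graphDepth hℓ).mono hcyl
      contDiffOn_entry := (contDiffOn_graphHeight hℓ hℓt).mono hcyl
      exit_pos := fun x hx => (mem_graphDomain.1 hx).2.1
      exit_le := fun x hx => by
        obtain ⟨hx', -, hheight⟩ := mem_graphDomain.1 hx
        exact (sub_nonneg.1 hheight.le).trans (hthin _ hx')
      fderiv_exit_le := fun x hx => (hexit x hx).2
      neg_le_fderiv_exit := fun x hx => (hexit x hx).1
      fderiv_entry_nonneg := fun x hx => by
        rw [fderiv_graphHeight (hdiff hℓ x hx) (hdiff hℓt x hx)]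
        exact sub_nonneg.2 ((hexit x hx).2.trans (hentry x hx))
      isCompact_core := fun σ hσ =>
        isCompact_graphDomain_core hb hℓ.continuousOn hℓt.continuousOn hℓt0 hσ }

theorem eventually_graphDomain_bump_subset (hℓ : ContinuousAt ℓ 0) {s : Set (Esp (d + 1))}
    (hs : s ∈ 𝓝 (graphMk d 0 (ℓ 0))) :
    ∀ᶠ r in 𝓝[>] (0 : ℝ), graphDomain d r ℓ (bump r) ⊆ s := by
  have hcont : ContinuousAt (fun q : Esp d × ℝ => graphMk d q.1 (ℓ q.1 - q.2)) (0, 0) :=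
    continuous_graphMk.continuousAt.comp (f := fun q : Esp d × ℝ => (q.1, ℓ q.1 - q.2))
      (continuousAt_fst.prodMk ((ContinuousAt.fst' hℓ).sub continuousAt_snd))
  obtain ⟨η, hη, hball⟩ := Metric.mem_nhds_iff.1 (hcont.preimage_mem_nhds (by simpa using hs))
  filter_upwards [Ioo_mem_nhdsGT (lt_min hη one_pos)] with r ⟨hr, hrη⟩ x hx
  obtain ⟨hx', hdepth, hheight⟩ := mem_graphDomain.1 hx
  have hdepth_lt : graphDepth ℓ x < η :=
    calc graphDepth ℓ x < bump r (horizontal d x) := sub_pos.1 hheight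
      _ ≤ r ^ 4 := bump_le hx'.le
      _ ≤ r := pow_le_of_le_one hr.le (hrη.trans_le (min_le_right _ _)).le four_ne_zero
      _ < η := hrη.trans_le (min_le_left _ _)
  have hmem : (horizontal d x, graphDepth ℓ x) ∈ ball (0 : Esp d × ℝ) η := by
    rw [mem_ball_zero_iff, Prod.norm_mk, max_lt_iff, Real.norm_of_nonneg hdepth.le]
    exact ⟨hx'.trans (hrη.trans_le (min_le_left _ _)), hdepth_lt⟩
  have := hball hmem
  rwa [mem_preimage, graphMk_horizontal_sub_graphDepth] at this

theorem eventually_isExitPair_graphDomain_bump {H : Esp (d + 1) → Esp (d + 1)} {ρ T δ B : ℝ}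
    {x₀ : Esp (d + 1)} (hx₀ : x₀ = graphMk d 0 (ℓ 0)) (hT : 0 < T) (hδ : 0 < δ) (hρ : 0 < ρ)
    (hℓ : ContDiffOn ℝ 1 ℓ (closedBall 0 ρ)) (hH : ContDiffAt ℝ 1 H x₀)
    (hexit : fderiv ℝ (graphDepth ℓ) x₀ (H x₀) ∈ Ioo (-B) (-δ)) :
    ∀ᶠ r in 𝓝[>] (0 : ℝ), IsExitPair (graphDomain d r ℓ (bump r)) H (graphDepth ℓ)
      (graphHeight ℓ (bump r)) T δ B := by
  have hℓ0 : ContDiffAt ℝ 1 ℓ 0 := hℓ.contDiffAt (closedBall_mem_nhds 0 hρ)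
  have hrate : ContinuousAt (fun x => fderiv ℝ (graphDepth ℓ) x (H x)) x₀ := by
    have hdepth : ContDiffAt ℝ 1 (graphDepth ℓ) x₀ :=
      ((ContDiffAt.comp x₀ (by simpa [hx₀] using hℓ0) (horizontal d).contDiff.contDiffAt)).sub
        (vertical d).contDiff.contDiffAt
    exact (hdepth.continuousAt_fderiv one_ne_zero).clm_apply hH.continuousAt
  set A := ‖horizontal d (H x₀)‖ + 1
  have hspeed : ∀ᶠ x in 𝓝 x₀, ‖horizontal d (H x)‖ < A :=
    ((horizontal d).continuous.continuousAt.comp hH.continuousAt).norm.eventually_lt_const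
      (lt_add_one _)
  have hsmall : ∀ᶠ r in 𝓝[>] (0 : ℝ), r ^ 4 < δ * T / 2 ∧ 4 * r ^ 3 * A < δ := by
    refine nhdsWithin_le_nhds (Filter.Eventually.and ?_ ?_) <;>
      exact (isOpen_lt (by fun_prop) continuous_const).mem_nhds (by
        simp only [mem_ofPred_eq, ne_eq, OfNat.ofNat_ne_zero, not_false_eq_true, zero_pow,
          mul_zero, zero_mul]
        positivity)
  have hnhds : {x | ContDiffAt ℝ 1 H x ∧ fderiv ℝ (graphDepth ℓ) x (H x) ∈ Ioo (-B) (-δ) ∧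
      ‖horizontal d (H x)‖ < A ∧ x ∈ ball x₀ 1} ∈ 𝓝 (graphMk d 0 (ℓ 0)) := by
    rw [← hx₀]
    exact (hH.eventually (by simp)).and
      ((hrate.eventually (Ioo_mem_nhds hexit.1 hexit.2)).and
        (hspeed.and (ball_mem_nhds x₀ one_pos)))
  filter_upwards [eventually_graphDomain_bump_subset hℓ0.continuousAt hnhds, hsmall,
    Ioo_mem_nhdsGT hρ] with r hD ⟨hthin, hflat⟩ hr
  refine isExitPair_graphDomain (isBounded_ball.subset fun x hx => (hD hx).2.2.2)
    (fun x hx => (hD hx).1.contDiffWithinAt) (hℓ.mono (closedBall_subset_closedBall hr.2.le))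
    (contDiff_bump r).contDiffOn (fun _ => bump_of_norm_eq)
    (fun x' hx' => (bump_le hx'.le).trans hthin.le)
    (fun x hx => Ioo_subset_Icc_self (hD hx).2.1) fun x hx => neg_le_of_abs_le ?_
  calc |fderiv ℝ (bump r) (horizontal d x) (horizontal d (H x))|
      ≤ 4 * r ^ 3 * ‖horizontal d (H x)‖ :=
        abs_fderiv_bump_apply_le (mem_graphDomain.1 hx).1.le _
    _ ≤ 4 * r ^ 3 * A :=
        mul_le_mul_of_nonneg_left (hD hx).2.2.1.le (mul_nonneg zero_le_four (pow_nonneg hr.1.le 3))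
    _ ≤ δ := hflat.le

end GraphGeometry

section BoundaryLayer

open Filter Topology

theorem integrable_deriv_cutoff {N : ℝ} (hN : 0 < N) : Integrable (deriv (cutoff N)) := by
  refine (continuous_deriv_cutoff N).integrable_of_hasCompactSupport
    (HasCompactSupport.intro (isCompact_Icc (a := 1 / N) (b := 2 / N)) fun r hr => ?_)
  rcases not_and_or.1 hr with hr | hr
  · exact deriv_cutoff_eq_zero_of_le ((le_div_iff₀' hN).1 (not_le.1 hr).le)
  · exact deriv_cutoff_eq_zero_of_ge ((div_le_iff₀' hN).1 (not_le.1 hr).le)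

theorem integral_deriv_cutoff {N : ℝ} (hN : 0 < N) : ∫ r, deriv (cutoff N) r = 1 := by
  have hbot : Tendsto (cutoff N) atBot (𝓝 0) := tendsto_const_nhds.congr' <| by
    filter_upwards [eventually_le_atBot (1 / N)] with r hr
    exact (cutoff_eq_zero ((le_div_iff₀' hN).1 hr)).symm
  have htop : Tendsto (cutoff N) atTop (𝓝 1) := tendsto_const_nhds.congr' <| by
    filter_upwards [eventually_ge_atTop (2 / N)] with r hr
    exact (cutoff_eq_one ((div_le_iff₀' hN).1 hr)).symm
  simpa using integral_of_hasDerivAt_of_tendsto (hasDerivAt_cutoff N)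
    (integrable_deriv_cutoff hN) hbot htop

variable {d : ℕ} {ℓ ℓt : Esp d → ℝ}

theorem integrableOn_and_integral_mul_graphDepth {s : Set (Esp d)} (hs : MeasurableSet s)
    (hℓ : ContinuousOn ℓ s) {F : Esp d → ℝ} (hF : IntegrableOn F s) {ψ : ℝ → ℝ}
    (hψ : Integrable ψ) :
    IntegrableOn (fun x => F (horizontal d x) * ψ (graphDepth ℓ x)) (horizontal d ⁻¹' s) ∧
      ∫ x in horizontal d ⁻¹' s, F (horizontal d x) * ψ (graphDepth ℓ x)
        = (∫ x' in s, F x') * ∫ r, ψ r := by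
  classical
  have hpre : MeasurableSet (horizontal d ⁻¹' s) := (horizontal d).continuous.measurable hs
  have hflat := (measurePreserving_graphDepth
    (hℓ.measurable_piecewise (continuousOn_const (c := (0 : ℝ))) hs)).restrict_preimage
      (hs.prod MeasurableSet.univ)
  rw [← Measure.prod_restrict, Measure.restrict_univ, mk_preimage_prod, preimage_univ,
    inter_univ] at hflat
  have hprod : Integrable (fun q : Esp d × ℝ => F q.1 * ψ q.2)
      ((volume.restrict s).prod volume) := hF.mul_prod hψ
  have hcongr : EqOn
      (fun x => F (horizontal d x) * ψ (graphDepth (s.piecewise ℓ fun _ => 0) x))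
      (fun x => F (horizontal d x) * ψ (graphDepth ℓ x)) (horizontal d ⁻¹' s) := fun x hx => by
    simp only [graphDepth, piecewise_eq_of_mem _ _ _ (mem_preimage.1 hx)]
  refine ⟨(integrableOn_congr_fun hcongr hpre).1
    ((hflat.integrable_comp hprod.aestronglyMeasurable).2 hprod), ?_⟩
  rw [← setIntegral_congr_fun hpre hcongr, ← integral_prod_mul, ← hflat.map_eq,
    integral_map hflat.aemeasurable (hflat.map_eq.symm ▸ hprod.aestronglyMeasurable)]

section Layer

variable {r : ℝ} {K : Set (Esp (d + 1))} {G : Esp (d + 1) → ℝ}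

theorem continuousOn_graph_trace {s : Set (Esp d)} (hℓ : ContinuousOn ℓ s)
    (hΓ : ∀ x' ∈ s, graphMk d x' (ℓ x') ∈ K) (hG : ContinuousOn G K) :
    ContinuousOn (fun x' => G (graphMk d x' (ℓ x'))) s :=
  hG.comp (continuous_graphMk.comp_continuousOn (continuousOn_id.prodMk hℓ)) hΓ

theorem eventually_exitLayer_mul_le (hK : IsCompact K) (hDK : graphDomain d r ℓ ℓt ⊆ K)
    (hΓ : ∀ x' ∈ ball (0 : Esp d) r, graphMk d x' (ℓ x') ∈ K) (hG : ContinuousOn G K)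
    (hG0 : ∀ x, 0 ≤ G x) (h : Esp (d + 1) → ℝ) {e : ℝ} (he : 0 < e) :
    ∀ᶠ N in atTop, ∀ x ∈ graphDomain d r ℓ ℓt, exitLayer (graphDepth ℓ) h N x * G x ≤
      (G (graphMk d (horizontal d x) (ℓ (horizontal d x))) + e)
        * deriv (cutoff N) (graphDepth ℓ x) := by
  obtain ⟨η, hη, hclose⟩ := Metric.uniformContinuousOn_iff.1
    (hK.uniformContinuousOn_of_continuous hG) e he
  filter_upwards [eventually_ge_atTop (2 / η), eventually_gt_atTop 0] with N hNη hN x hx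
  set x₀ := graphMk d (horizontal d x) (ℓ (horizontal d x))
  have hderiv := deriv_cutoff_nonneg hN.le (graphDepth ℓ x)
  rcases le_or_gt 2 (N * graphDepth ℓ x) with hdeep | hshallow
  · simp [exitLayer, deriv_cutoff_eq_zero_of_ge hdeep]
  have hdepth : 0 < graphDepth ℓ x := (mem_graphDomain.1 hx).2.1
  have hdist : dist x x₀ < η := by
    calc dist x x₀ = graphDepth ℓ x := by
          conv_lhs => rw [← graphMk_horizontal_sub_graphDepth ℓ x]
          rw [dist_graphMk, Real.dist_eq, sub_sub_cancel_left, abs_neg, abs_of_pos hdepth]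
      _ < η := by
          refine lt_of_mul_lt_mul_left (hshallow.trans_le ?_) hN.le
          exact (div_le_iff₀ hη).1 hNη
  have hGx : G x ≤ G x₀ + e := by
    have := hclose x (hDK hx) x₀ (hΓ _ (graphDomain_subset_preimage_ball hx)) hdist
    linarith [(abs_lt.1 (Real.dist_eq _ _ ▸ this)).2]
  calc exitLayer (graphDepth ℓ) h N x * G x
      ≤ (1 * deriv (cutoff N) (graphDepth ℓ x)) * (G x₀ + e) := by
        rw [exitLayer]
        have := hG0 x
        gcongr
        exact cutoff_le_one _ _
    _ = (G x₀ + e) * deriv (cutoff N) (graphDepth ℓ x) := by ring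

theorem eventually_integral_exitLayer_mul_le (hK : IsCompact K)
    (hD : MeasurableSet (graphDomain d r ℓ ℓt)) (hDK : graphDomain d r ℓ ℓt ⊆ K)
    (hℓ : ContinuousOn ℓ (closedBall 0 r))
    (hΓ : ∀ x' ∈ closedBall (0 : Esp d) r, graphMk d x' (ℓ x') ∈ K) (hG : ContinuousOn G K)
    (hG0 : ∀ x, 0 ≤ G x) (h : Esp (d + 1) → ℝ) {X : ℝ}
    (hX : ∫ x' in ball (0 : Esp d) r, G (graphMk d x' (ℓ x')) < X) :
    ∀ᶠ N in atTop,
      ∫ x in graphDomain d r ℓ ℓt, exitLayer (graphDepth ℓ) h N x * G x ≤ X := by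
  have htrace : IntegrableOn (fun x' => G (graphMk d x' (ℓ x'))) (ball 0 r) :=
    ((continuousOn_graph_trace hℓ hΓ hG).integrableOn_compact
      (isCompact_closedBall 0 r)).mono_set ball_subset_closedBall
  have hconst (e : ℝ) : IntegrableOn (fun _ : Esp d => e) (ball 0 r) :=
    integrableOn_const measure_ball_lt_top.ne
  have hlim : Tendsto (fun e => ∫ x' in ball (0 : Esp d) r, (G (graphMk d x' (ℓ x')) + e))
      (𝓝 0) (𝓝 (∫ x' in ball (0 : Esp d) r, G (graphMk d x' (ℓ x')))) := by
    simp_rw [integral_add htrace (hconst _), setIntegral_const]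
    exact Continuous.tendsto' (by fun_prop) _ _ (by simp)
  obtain ⟨e, heX, he⟩ := ((hlim.mono_left nhdsWithin_le_nhds).eventually_lt_const hX
    |>.and (self_mem_nhdsWithin : Ioi (0 : ℝ) ∈ 𝓝[>] 0)).exists
  filter_upwards [eventually_exitLayer_mul_le hK hDK
    (fun x' hx' => hΓ x' (ball_subset_closedBall hx')) hG hG0 h he, eventually_gt_atTop 0]
    with N hle hN
  obtain ⟨hint, heq⟩ := integrableOn_and_integral_mul_graphDepth measurableSet_ball
    (hℓ.mono ball_subset_closedBall) (htrace.add (hconst e)) (integrable_deriv_cutoff hN)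
  rw [integral_deriv_cutoff hN, mul_one] at heq
  calc ∫ x in graphDomain d r ℓ ℓt, exitLayer (graphDepth ℓ) h N x * G x
      ≤ ∫ x in graphDomain d r ℓ ℓt,
          (G (graphMk d (horizontal d x) (ℓ (horizontal d x))) + e)
            * deriv (cutoff N) (graphDepth ℓ x) :=
        integral_mono_of_nonneg
          (Eventually.of_forall fun x => mul_nonneg (exitLayer_nonneg hN.le x) (hG0 x))
          (hint.mono_set graphDomain_subset_preimage_ball)
          ((ae_restrict_iff' hD).2 (Eventually.of_forall hle))
    _ ≤ ∫ x in horizontal d ⁻¹' ball 0 r,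
          (G (graphMk d (horizontal d x) (ℓ (horizontal d x))) + e)
            * deriv (cutoff N) (graphDepth ℓ x) :=
        setIntegral_mono_set hint
          (Eventually.of_forall fun x => mul_nonneg (add_nonneg (hG0 _) he.le)
            (deriv_cutoff_nonneg hN.le _))
          graphDomain_subset_preimage_ball.eventuallyLE
    _ ≤ X := heq.trans_le heX.le

end Layer

theorem continuousOn_setIntegral_time {X : Type*} [PseudoMetricSpace X] {K : Set X} {T : ℝ}
    {Y : X × ℝ → ℝ} (hK : IsCompact K) (hY : ContinuousOn Y (K ×ˢ Icc 0 T)) :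
    ContinuousOn (fun x => ∫ t in Ioo 0 T, Y (x, t)) K := by
  obtain ⟨R, hR⟩ := (hK.prod isCompact_Icc).exists_bound_of_continuousOn hY
  refine MeasureTheory.continuousOn_of_dominated (bound := fun _ => R) (fun x hx => ?_)
    (fun x hx => ?_) (integrableOn_const measure_Ioo_lt_top.ne) ?_
  · exact ((continuousOn_time_slice hY hx).mono Ioo_subset_Icc_self).aestronglyMeasurable
      measurableSet_Ioo
  · filter_upwards [ae_restrict_mem measurableSet_Ioo] with t ht
    exact hR _ ⟨hx, Ioo_subset_Icc_self ht⟩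
  · filter_upwards [ae_restrict_mem measurableSet_Ioo] with t ht
    exact hY.comp (by fun_prop) fun x hx => ⟨hx, Ioo_subset_Icc_self ht⟩

theorem one_le_omegaW (ℓ : Esp d → ℝ) (x' : Esp d) : 1 ≤ omegaW d ℓ x' := by
  rw [omegaW, Real.one_le_sqrt]
  exact le_add_of_nonneg_right (sq_nonneg _)

theorem exists_continuousOn_eqOn_omegaW {ρ : ℝ} (hρ : 0 < ρ)
    (hℓ : ContDiffOn ℝ 1 ℓ (closedBall 0 ρ)) :
    ∃ ω : Esp d → ℝ, ContinuousOn ω (closedBall 0 ρ) ∧ EqOn (omegaW d ℓ) ω (ball 0 ρ) := by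
  have huniq : UniqueDiffOn ℝ (closedBall (0 : Esp d) ρ) :=
    uniqueDiffOn_convex (convex_closedBall 0 ρ)
      (by rw [interior_closedBall _ hρ.ne']; exact nonempty_ball.2 hρ)
  refine ⟨fun x' => Real.sqrt (1 + ‖fderivWithin ℝ ℓ (closedBall 0 ρ) x'‖ ^ 2),
    (continuousOn_const.add ((hℓ.continuousOn_fderivWithin huniq le_rfl).norm.pow 2)).sqrt,
    fun x' hx' => ?_⟩
  beta_reduce
  rw [omegaW, gradient, LinearIsometryEquiv.norm_map,
    fderivWithin_of_mem_nhds (closedBall_mem_nhds_of_mem hx')]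

theorem integral_trace_le_integral_mul_omegaW {r ρ T : ℝ} (hρ : 0 < ρ) (hr : r ≤ ρ)
    (hℓ : ContDiffOn ℝ 1 ℓ (closedBall 0 ρ)) {Y : Esp d × ℝ → ℝ}
    (hY : ContinuousOn Y (closedBall 0 ρ ×ˢ Icc 0 T)) (hY0 : ∀ q, 0 ≤ Y q) :
    ∫ x' in ball (0 : Esp d) r, ∫ t in Ioo 0 T, Y (x', t)
      ≤ ∫ t in Ioo 0 T, ∫ x' in ball (0 : Esp d) ρ, Y (x', t) * omegaW d ℓ x' := by
  obtain ⟨ω, hω, hωeq⟩ := exists_continuousOn_eqOn_omegaW hρ hℓ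
  have hint {Z : Esp d × ℝ → ℝ} (hZ : ContinuousOn Z (closedBall 0 ρ ×ˢ Icc 0 T)) :
      Integrable Z ((volume.restrict (ball 0 ρ)).prod (volume.restrict (Ioo 0 T))) := by
    rw [Measure.prod_restrict]
    exact (hZ.integrableOn_compact ((isCompact_closedBall 0 ρ).prod isCompact_Icc)).mono_set
      (prod_mono ball_subset_closedBall Ioo_subset_Icc_self)
  have hYω : Integrable (fun q : Esp d × ℝ => Y q * omegaW d ℓ q.1)
      ((volume.restrict (ball 0 ρ)).prod (volume.restrict (Ioo 0 T))) := by
    refine (hint (hY.mul (hω.comp continuousOn_fst fun q hq => hq.1))).congr ?_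
    rw [Measure.prod_restrict]
    filter_upwards [ae_restrict_mem (measurableSet_ball.prod measurableSet_Ioo)] with q hq
    exact congrArg (Y q * ·) (hωeq hq.1).symm
  have hmass := (hint hY).integral_prod_left
  have hnonneg (x' : Esp d) : 0 ≤ ∫ t in Ioo 0 T, Y (x', t) := integral_nonneg fun t => hY0 _
  calc ∫ x' in ball (0 : Esp d) r, ∫ t in Ioo 0 T, Y (x', t)
      ≤ ∫ x' in ball (0 : Esp d) ρ, ∫ t in Ioo 0 T, Y (x', t) :=
        setIntegral_mono_set hmass (Eventually.of_forall hnonneg)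
          (ball_subset_ball hr).eventuallyLE
    _ ≤ ∫ x' in ball (0 : Esp d) ρ, ∫ t in Ioo 0 T, Y (x', t) * omegaW d ℓ x' := by
        refine integral_mono hmass hYω.integral_prod_left fun x' => ?_
        beta_reduce
        rw [integral_mul_const]
        exact le_mul_of_one_le_right (hnonneg x') (one_le_omegaW ℓ x')
    _ = ∫ t in Ioo 0 T, ∫ x' in ball (0 : Esp d) ρ, Y (x', t) * omegaW d ℓ x' :=
        integral_integral_swap hYω

end BoundaryLayer

section GraphEstimate

open Filter Topology

theorem eventually_cutoff_eq_one {r : ℝ} (hr : 0 < r) : ∀ᶠ N in atTop, cutoff N r = 1 := by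
  filter_upwards [eventually_ge_atTop (2 / r)] with N hN
  exact cutoff_eq_one ((div_le_iff₀ hr).1 hN)

theorem tendsto_integral_mul_cutoff {X : Type*} [MeasurableSpace X] {μ : Measure X}
    {F h k : X → ℝ} (hF : Integrable F μ) (hh : AEStronglyMeasurable h μ)
    (hk : AEStronglyMeasurable k μ) (hpos : ∀ᵐ x ∂μ, 0 < h x ∧ 0 < k x) :
    Tendsto (fun N => ∫ x, F x * (cutoff N (h x) * cutoff N (k x)) ∂μ) atTop
      (𝓝 (∫ x, F x ∂μ)) := by
  refine tendsto_integral_filter_of_dominated_convergence (fun x => ‖F x‖)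
    (Eventually.of_forall fun N => ?_) (Eventually.of_forall fun N => ae_of_all μ fun x => ?_)
    hF.norm ?_
  · have hcont := (contDiff_cutoff N).continuous
    exact hF.aestronglyMeasurable.mul
      ((hcont.comp_aestronglyMeasurable hh).mul (hcont.comp_aestronglyMeasurable hk))
  · obtain ⟨hnonneg, hle⟩ := cutoff_mul_cutoff_mem_Icc N (h x) (k x)
    rw [norm_mul, Real.norm_of_nonneg hnonneg]
    exact mul_le_of_le_one_right (norm_nonneg _) hle
  · filter_upwards [hpos] with x ⟨hhx, hkx⟩
    refine tendsto_const_nhds.congr' ?_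
    filter_upwards [eventually_cutoff_eq_one hhx, eventually_cutoff_eq_one hkx] with N hN hN'
    rw [hN, hN', mul_one, mul_one]

theorem integrableOn_sq_of_ae_le {X : Type*} [MeasurableSpace X] {μ : Measure X} {D : Set X}
    {f : X → ℝ} {C : ℝ} (hD : μ D < ⊤) (hf : AEStronglyMeasurable f (μ.restrict D))
    (hfC : ∀ᵐ x ∂μ.restrict D, |f x| ≤ C) : IntegrableOn (fun x => f x ^ 2) D μ :=
  IntegrableOn.of_bound hD (hf.pow 2) (C ^ 2) <| hfC.mono fun x hx => by
    rw [norm_pow]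
    exact pow_le_pow_left₀ (norm_nonneg _) hx 2

variable {d : ℕ} {ℓ ℓt : Esp d → ℝ} {H : Esp (d + 1) → Esp (d + 1)}
  {r ρ T δ B M Λ α V C : ℝ} {K : Set (Esp (d + 1))} {p f g : Esp (d + 1) → ℝ}
  {v y : Esp (d + 1) × ℝ → ℝ}

namespace IsExitPair

theorem integral_sq_le_integral_trace
    (P : IsExitPair (graphDomain d r ℓ ℓt) H (graphDepth ℓ) (graphHeight ℓ ℓt) T δ B)
    (hT : 0 < T) (hδ : 0 < δ) (hB : 0 ≤ B) (hα : 0 < α) (hV : 0 < V) (hM : 0 ≤ M) (hΛ : 0 ≤ Λ)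
    (hy : IsTransportSolution (graphDomain d r ℓ ℓt) T H p (fun q => f q.1 * v q)
      (fun x => f x * g x) y)
    (hp : ∀ᵐ x ∂volume.restrict (graphDomain d r ℓ ℓt), |p x| ≤ M)
    (hdiv : ∀ x ∈ graphDomain d r ℓ ℓt, |divergence H x| ≤ Λ)
    (hfm : AEStronglyMeasurable f (volume.restrict (graphDomain d r ℓ ℓt)))
    (hfC : ∀ᵐ x ∂volume.restrict (graphDomain d r ℓ ℓt), |f x| ≤ C)
    (hg : ∀ x ∈ graphDomain d r ℓ ℓt, α ≤ g x ^ 2)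
    (hv : ContinuousOn v (graphDomain d r ℓ ℓt ×ˢ Icc 0 T))
    (hvV : ∀ x ∈ graphDomain d r ℓ ℓt, ∫ t in Ioo 0 T, v (x, t) ^ 2 ≤ V)
    (hK : IsCompact K) (hDK : graphDomain d r ℓ ℓt ⊆ K) (hℓ : ContinuousOn ℓ (closedBall 0 r))
    (hΓ : ∀ x' ∈ closedBall (0 : Esp d) r, graphMk d x' (ℓ x') ∈ K)
    (hyK : ContinuousOn y (K ×ˢ Icc 0 T)) :
    ∫ x in graphDomain d r ℓ ℓt, f x ^ 2
      ≤ 2 * B / α * Real.exp ((2 * M + Λ + 2 * V / α) * T / 2)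
        * ∫ x' in ball (0 : Esp d) r, ∫ t in Ioo 0 T, y (graphMk d x' (ℓ x'), t) ^ 2 := by
  set D := graphDomain d r ℓ ℓt
  have hDm : MeasurableSet D := P.isOpen.measurableSet
  have hlim : Tendsto (fun N => ∫ x in D, f x ^ 2 * (cutoff N (graphHeight ℓ ℓt x)
      * cutoff N (graphDepth ℓ x))) atTop (𝓝 (∫ x in D, f x ^ 2)) := by
    refine tendsto_integral_mul_cutoff
      (integrableOn_sq_of_ae_le (hK.measure_lt_top.trans_le' (measure_mono hDK)) hfm hfC)
      (P.contDiffOn_entry.continuousOn.aestronglyMeasurable hDm)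
      (P.contDiffOn_exit.continuousOn.aestronglyMeasurable hDm) ?_
    filter_upwards [ae_restrict_mem hDm] with x hx
    exact (mem_graphDomain.1 hx).2.symm
  have hle (X : ℝ)
      (hX : ∫ x' in ball (0 : Esp d) r, ∫ t in Ioo 0 T, y (graphMk d x' (ℓ x'), t) ^ 2 < X) :
      ∫ x in D, f x ^ 2 ≤ 2 * B / α * Real.exp ((2 * M + Λ + 2 * V / α) * T / 2) * X := by
    refine le_of_tendsto hlim ?_
    filter_upwards [eventually_gt_atTop 0, eventually_integral_exitLayer_mul_le hK hDm hDK hℓ hΓ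
      (continuousOn_setIntegral_time hK (hyK.pow 2))
      (fun x => integral_nonneg fun t => sq_nonneg _) (graphHeight ℓ ℓt) hX] with N hN hlayer
    exact (P.integral_sq_mul_cutoff_le_integral_exitLayer hT hδ hN hα hV hM hΛ hy hp hdiv hfm hfC
      hg hv hvV).trans (mul_le_mul_of_nonneg_left hlayer (by positivity))
  exact ge_of_tendsto ((continuous_const.mul continuous_id).continuousWithinAt (s := Ioi _))
    (eventually_mem_nhdsWithin.mono hle)

end IsExitPair

end GraphEstimate

section InverseProblem

open Filter Topology

namespace IsTransportSolution

variable {E : Type*} [NormedAddCommGroup E] [NormedSpace ℝ E] {Ω D : Set E} {T : ℝ} {H : E → E}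
  {p p₁ p₂ g : E → ℝ} {F y y₁ y₂ : E × ℝ → ℝ}

theorem mono (hy : IsTransportSolution Ω T H p F g y) (hD : D ⊆ Ω) :
    IsTransportSolution D T H p F g y where
  contDiffOn := hy.contDiffOn.mono (prod_mono_left hD)
  fderiv_add_mul q hq := hy.fderiv_add_mul q ⟨hD hq.1, hq.2⟩
  initial x hx := hy.initial x (hD hx)

theorem sub_of_homogeneous (hD : IsOpen D) (h₁ : IsTransportSolution D T H p₁ 0 g y₁)
    (h₂ : IsTransportSolution D T H p₂ 0 g y₂) :
    IsTransportSolution D T H p₁ (fun q => (p₂ q.1 - p₁ q.1) * y₂ q) 0 (y₁ - y₂) where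
  contDiffOn := h₁.contDiffOn.sub h₂.contDiffOn
  fderiv_add_mul q hq := by
    have eq₁ := h₁.fderiv_add_mul q hq
    have eq₂ := h₂.fderiv_add_mul q hq
    rw [((hasFDerivAt_of_cylinder hD h₁.contDiffOn hq).sub
      (hasFDerivAt_of_cylinder hD h₂.contDiffOn hq)).fderiv, sub_apply, Pi.sub_apply]
    simp only [Pi.zero_apply] at eq₁ eq₂
    linear_combination eq₁ - eq₂
  initial x hx := by simp [h₁.initial x hx, h₂.initial x hx]

end IsTransportSolution

section RegularSolution

variable {E : Type*} [NormedAddCommGroup E] [InnerProductSpace ℝ E] [CompleteSpace E]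

/-- `u` is a solution of `∂ₜu + ⟨H, ∇u⟩ + p u = 0` on `Ω × (0, T)` with `u(·, 0) = a` such that `u`
and `∂ₜu` are `C¹` up to the boundary. -/
structure IsRegularSolution (Ω : Set E) (T : ℝ) (H : E → E) (p a : E → ℝ) (u : E → ℝ → ℝ) :
    Prop where
  contDiffOn : ContDiffOn ℝ 1 (fun q : E × ℝ => u q.1 q.2) (closure Ω ×ˢ Icc 0 T)
  contDiffOn_deriv : ContDiffOn ℝ 1 (fun q : E × ℝ => deriv (u q.1) q.2) (closure Ω ×ˢ Icc 0 T)
  transport : ∀ x ∈ Ω, ∀ t ∈ Ioo 0 T,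
    deriv (u x) t + ⟪H x, gradient (fun z => u z t) x⟫ + p x * u x t = 0
  initial : ∀ x ∈ Ω, u x 0 = a x

variable {Ω : Set E} {T : ℝ} {H : E → E} {p p₁ p₂ a : E → ℝ} {u u₁ u₂ : E → ℝ → ℝ}

namespace IsRegularSolution

theorem deriv_eq_fderiv (hΩ : IsOpen Ω) (hu : IsRegularSolution Ω T H p a u) {q : E × ℝ}
    (hq : q ∈ Ω ×ˢ Ioo 0 T) :
    deriv (u q.1) q.2 = fderiv ℝ (fun q : E × ℝ => u q.1 q.2) q (0, 1) :=
  (hasDerivAt_time_slice hΩ (hu.contDiffOn.mono (prod_mono_left subset_closure)) hq.1 hq.2).deriv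

theorem isTransportSolution (hΩ : IsOpen Ω) (hu : IsRegularSolution Ω T H p a u) :
    IsTransportSolution Ω T H p 0 a (fun q => u q.1 q.2) where
  contDiffOn := hu.contDiffOn.mono (prod_mono_left subset_closure)
  fderiv_add_mul q hq := by
    have hspace := hasFDerivAt_space_slice hΩ
      (hu.contDiffOn.mono (prod_mono_left subset_closure)) hq.1 hq.2
    have hsplit : ((H q.1, 1) : E × ℝ) = (0, 1) + ContinuousLinearMap.inl ℝ E ℝ (H q.1) := by simp
    have heq := hu.transport q.1 hq.1 q.2 hq.2
    rwa [inner_gradient_right, conj_trivial, hspace.fderiv, hu.deriv_eq_fderiv hΩ hq,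
      ContinuousLinearMap.comp_apply, ← map_add, ← hsplit] at heq
  initial := hu.initial

theorem sub_deriv (hΩ : IsOpen Ω) (hT : 0 < T) (h₁ : IsRegularSolution Ω T H p₁ a u₁)
    (h₂ : IsRegularSolution Ω T H p₂ a u₂) :
    IsTransportSolution Ω T H p₁ (fun q => (p₂ q.1 - p₁ q.1) * deriv (u₂ q.1) q.2)
      (fun x => (p₂ x - p₁ x) * u₂ x 0)
      (fun q => deriv (u₁ q.1) q.2 - deriv (u₂ q.1) q.2) := by
  have hy₁ := h₁.isTransportSolution hΩ
  have hy₂ := h₂.isTransportSolution hΩ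
  refine (hy₁.sub_of_homogeneous hΩ hy₂).time_deriv hΩ hT
    ((h₁.contDiffOn_deriv.sub h₂.contDiffOn_deriv).mono (prod_mono_left subset_closure))
    (fun q hq => ?_) (fun x hx => ?_) fun q hq => ?_
  · rw [((hasFDerivAt_of_cylinder hΩ hy₁.contDiffOn hq).sub
      (hasFDerivAt_of_cylinder hΩ hy₂.contDiffOn hq)).fderiv, sub_apply,
      h₁.deriv_eq_fderiv hΩ hq, h₂.deriv_eq_fderiv hΩ hq]
  · exact continuousWithinAt_const.mul (((continuousOn_time_slice hy₂.contDiffOn.continuousOn hx) 0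
      (left_mem_Icc.2 hT.le)).mono Ioo_subset_Icc_self)
  · rw [h₂.deriv_eq_fderiv hΩ hq]
    exact (hasDerivAt_time_slice hΩ hy₂.contDiffOn hq.1 hq.2).const_mul (p₂ q.1 - p₁ q.1)

end IsRegularSolution

end RegularSolution

variable {d : ℕ} {ℓ ℓt : Esp d → ℝ} {r ρ c T δ B M M₀ : ℝ} {Ω U : Set (Esp (d + 1))}
  {H : Esp (d + 1) → Esp (d + 1)} {a : Esp (d + 1) → ℝ}

theorem graph_closedBall_subset_closure (hρ : 0 < ρ) (hc : 0 < c)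
    (hℓ : ContinuousOn ℓ (closedBall 0 ρ))
    (hΩ : ∀ (x' : Esp d) (xn : ℝ), ‖x'‖ < ρ → ℓ x' - c < xn → xn < ℓ x' → graphMk d x' xn ∈ Ω)
    {x' : Esp d} (hx' : x' ∈ closedBall 0 ρ) : graphMk d x' (ℓ x') ∈ closure Ω := by
  have hopen : MapsTo (fun x' => graphMk d x' (ℓ x')) (ball 0 ρ) (closure Ω) := fun x' hx' =>
    graphMk_mem_closure hc fun s hs => hΩ x' _ (mem_ball_zero_iff.1 hx')
      (sub_lt_sub_left hs.2 _) (sub_lt_self _ hs.1)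
  have hclosed := hopen.closure_of_continuousOn
  rw [closure_ball _ hρ.ne', closure_closure] at hclosed
  exact hclosed (continuous_graphMk.comp_continuousOn (continuousOn_id.prodMk hℓ)) hx'

theorem graphMk_mem_frontier_graphDomain {x' : Esp d} (hx' : ‖x'‖ < r) (hpos : 0 < ℓt x') :
    graphMk d x' (ℓ x') ∈ frontier (graphDomain d r ℓ ℓt) := by
  refine ⟨graphMk_mem_closure hpos fun s hs => ⟨x', _, hx', sub_lt_sub_left hs.2 _,
    sub_lt_self _ hs.1, rfl⟩, fun hmem => ?_⟩
  simpa using (mem_graphDomain.1 (interior_subset hmem)).2.1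

theorem graphDomain_subset (hr : r ≤ ρ) (hthin : ∀ x', ‖x'‖ < r → ℓt x' ≤ c)
    (hΩ : ∀ (x' : Esp d) (xn : ℝ), ‖x'‖ < ρ → ℓ x' - c < xn → xn < ℓ x' → graphMk d x' xn ∈ Ω) :
    graphDomain d r ℓ ℓt ⊆ Ω := by
  rintro _ ⟨x', xn, hx', hlower, hupper, rfl⟩
  exact hΩ x' xn (hx'.trans_le hr) (by linarith [hthin x' hx']) hupper

end InverseProblem

section LipschitzStability

open Filter Topology

variable {d : ℕ} {ℓ ℓt : Esp d → ℝ} {r ρ T δ B M Λ α V : ℝ} {Ω U : Set (Esp (d + 1))}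
  {H : Esp (d + 1) → Esp (d + 1)} {a p₁ p₂ : Esp (d + 1) → ℝ} {u₁ u₂ : Esp (d + 1) → ℝ → ℝ}

theorem integral_sq_trace_le_integral_mul_omegaW {K : Set (Esp (d + 1))}
    {y : Esp (d + 1) × ℝ → ℝ} (hρ : 0 < ρ) (hr : r ≤ ρ) (hℓ : ContDiffOn ℝ 1 ℓ (closedBall 0 ρ))
    (hΓ : ∀ x' ∈ closedBall (0 : Esp d) ρ, graphMk d x' (ℓ x') ∈ K)
    (hy : ContinuousOn y (K ×ˢ Icc 0 T)) :
    ∫ x' in ball (0 : Esp d) r, ∫ t in Ioo 0 T, y (graphMk d x' (ℓ x'), t) ^ 2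
      ≤ ∫ t in Ioo 0 T, ∫ x' in ball (0 : Esp d) ρ,
        y (graphMk d x' (ℓ x'), t) ^ 2 * omegaW d ℓ x' := by
  have hgraph : ContinuousOn (fun q : Esp d × ℝ => graphMk d q.1 (ℓ q.1))
      (closedBall 0 ρ ×ˢ Icc 0 T) :=
    continuous_graphMk.comp_continuousOn <| continuousOn_fst.prodMk <|
      hℓ.continuousOn.comp continuousOn_fst fun q hq => hq.1
  exact integral_trace_le_integral_mul_omegaW hρ hr hℓ
    (Y := fun q => y (graphMk d q.1 (ℓ q.1), q.2) ^ 2)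
    ((hy.comp (hgraph.prodMk continuousOn_snd) fun q hq => ⟨hΓ q.1 hq.1, hq.2⟩).pow 2)
    fun q => sq_nonneg _

namespace IsExitPair

theorem integral_sq_sub_le_integral_trace
    (P : IsExitPair (graphDomain d r ℓ ℓt) H (graphDepth ℓ) (graphHeight ℓ ℓt) T δ B)
    (hT : 0 < T) (hδ : 0 < δ) (hB : 0 ≤ B) (hα : 0 < α) (hV : 0 < V) (hM : 0 ≤ M) (hΛ : 0 ≤ Λ)
    (hρ : 0 < ρ) (hr : r ≤ ρ) (hℓ : ContDiffOn ℝ 1 ℓ (closedBall 0 ρ))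
    (hΩo : IsOpen Ω) (hΩb : Bornology.IsBounded Ω) (hD : graphDomain d r ℓ ℓt ⊆ Ω)
    (hΓ : ∀ x' ∈ closedBall (0 : Esp d) ρ, graphMk d x' (ℓ x') ∈ closure Ω)
    (hdiv : ∀ x ∈ graphDomain d r ℓ ℓt, |divergence H x| ≤ Λ)
    (ha : ∀ x ∈ graphDomain d r ℓ ℓt, α ≤ a x ^ 2)
    (hp₁ : AEStronglyMeasurable p₁ (volume.restrict Ω))
    (hp₁M : ∀ᵐ x ∂volume.restrict Ω, |p₁ x| ≤ M)
    (hp₂ : AEStronglyMeasurable p₂ (volume.restrict Ω))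
    (hp₂M : ∀ᵐ x ∂volume.restrict Ω, |p₂ x| ≤ M)
    (h₁ : IsRegularSolution Ω T H p₁ a u₁) (h₂ : IsRegularSolution Ω T H p₂ a u₂)
    (hsup : ∫ t in Ioo 0 T, (⨆ x : graphDomain d r ℓ ℓt, |deriv (u₂ x) t|) ^ 2 ≤ V) :
    ∫ x in graphDomain d r ℓ ℓt, (p₁ x - p₂ x) ^ 2
      ≤ 2 * B / α * Real.exp ((2 * M + Λ + 2 * V / α) * T / 2)
        * ∫ t in Ioo 0 T, ∫ x' in ball (0 : Esp d) ρ,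
          (deriv (u₁ (graphMk d x' (ℓ x'))) t - deriv (u₂ (graphMk d x' (ℓ x'))) t) ^ 2
            * omegaW d ℓ x' := by
  have hK : IsCompact (closure Ω) := hΩb.isCompact_closure
  have hDK : graphDomain d r ℓ ℓt ⊆ closure Ω := hD.trans subset_closure
  have hrestrict : volume.restrict (graphDomain d r ℓ ℓt) ≤ volume.restrict Ω :=
    Measure.restrict_mono hD le_rfl
  have hsource : ∀ᵐ x ∂volume.restrict (graphDomain d r ℓ ℓt), |p₂ x - p₁ x| ≤ M + M := by
    filter_upwards [ae_mono hrestrict hp₁M, ae_mono hrestrict hp₂M] with x hx₁ hx₂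
    exact (abs_sub _ _).trans (add_le_add hx₂ hx₁)
  have hv := h₂.contDiffOn_deriv.continuousOn
  have hvV (x) (hx : x ∈ graphDomain d r ℓ ℓt) : ∫ t in Ioo 0 T, deriv (u₂ x) t ^ 2 ≤ V := by
    have hpoint := setIntegral_sq_le_setIntegral_iSup_sq (μ := volume) hK isCompact_Icc hDK hv hx
    simp only [integral_Icc_eq_integral_Ioo] at hpoint
    exact hpoint.trans hsup
  have hy := h₁.contDiffOn_deriv.continuousOn.sub hv
  have hball : closedBall (0 : Esp d) r ⊆ closedBall 0 ρ := closedBall_subset_closedBall hr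
  have hbound := P.integral_sq_le_integral_trace hT hδ hB hα hV hM hΛ
    ((h₁.sub_deriv hΩo hT h₂).mono hD) (ae_mono hrestrict hp₁M) hdiv
    ((hp₂.sub hp₁).mono_measure hrestrict) hsource
    (fun x hx => by simpa only [h₂.initial x (hD hx)] using ha x hx)
    (hv.mono (prod_mono_left hDK)) hvV hK hDK (hℓ.continuousOn.mono hball)
    (fun x' hx' => hΓ x' (hball hx')) hy
  simp only [sub_sq_comm (p₁ _)]
  exact hbound.trans <| mul_le_mul_of_nonneg_left
    (integral_sq_trace_le_integral_mul_omegaW hρ hr hℓ hΓ hy) (by positivity)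

theorem exists_sqrt_integral_sq_sub_le
    (P : IsExitPair (graphDomain d r ℓ ℓt) H (graphDepth ℓ) (graphHeight ℓ ℓt) T δ B)
    (hT : 0 < T) (hδ : 0 < δ) (hB : 0 < B)
    (hρ : 0 < ρ) (hr : r ≤ ρ) (hℓ : ContDiffOn ℝ 1 ℓ (closedBall 0 ρ))
    (hΩo : IsOpen Ω) (hΩb : Bornology.IsBounded Ω) (hD : graphDomain d r ℓ ℓt ⊆ Ω)
    (hΓ : ∀ x' ∈ closedBall (0 : Esp d) ρ, graphMk d x' (ℓ x') ∈ closure Ω)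
    (hU : IsOpen U) (hΩU : closure Ω ⊆ U) (hH : ContDiffOn ℝ 1 H U)
    (ha : ContinuousOn a (closure Ω)) (ha0 : ∀ x ∈ closure Ω, a x ≠ 0) (M M₀ : ℝ) :
    ∃ C > 0, ∀ p₁ p₂ : Esp (d + 1) → ℝ,
      AEStronglyMeasurable p₁ (volume.restrict Ω) → (∀ᵐ x ∂volume.restrict Ω, |p₁ x| ≤ M) →
      AEStronglyMeasurable p₂ (volume.restrict Ω) → (∀ᵐ x ∂volume.restrict Ω, |p₂ x| ≤ M) →
      ∀ u₁ u₂ : Esp (d + 1) → ℝ → ℝ,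
      IsRegularSolution Ω T H p₁ a u₁ → IsRegularSolution Ω T H p₂ a u₂ →
      ∫ t in Ioo 0 T, (⨆ x : graphDomain d r ℓ ℓt, |deriv (u₂ x) t|) ^ 2 ≤ M₀ ^ 2 →
      √(∫ x in graphDomain d r ℓ ℓt, (p₁ x - p₂ x) ^ 2)
        ≤ C * √(∫ t in Ioo 0 T, ∫ x' in ball (0 : Esp d) ρ,
          (deriv (u₁ (graphMk d x' (ℓ x'))) t - deriv (u₂ (graphMk d x' (ℓ x'))) t) ^ 2
            * omegaW d ℓ x') := by
  have hK : IsCompact (closure Ω) := hΩb.isCompact_closure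
  have hDK : graphDomain d r ℓ ℓt ⊆ closure Ω := hD.trans subset_closure
  obtain ⟨α, hα, haα⟩ := hK.exists_forall_le' (ha.pow 2) fun x hx =>
    sq_pos_of_ne_zero (ha0 x hx)
  obtain ⟨Λ, hΛ⟩ := hK.exists_bound_of_continuousOn ((continuousOn_divergence hU hH).mono hΩU)
  refine ⟨√(2 * B / α * Real.exp ((2 * |M| + |Λ| + 2 * (M₀ ^ 2 + 1) / α) * T / 2)),
    by positivity, fun p₁ p₂ hp₁ hp₁M hp₂ hp₂M u₁ u₂ h₁ h₂ hsup => ?_⟩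
  rw [← Real.sqrt_mul (by positivity)]
  exact Real.sqrt_le_sqrt <| P.integral_sq_sub_le_integral_trace hT hδ hB.le hα (by positivity)
    (abs_nonneg M) (abs_nonneg Λ) hρ hr hℓ hΩo hΩb hD hΓ
    (fun x hx => (hΛ x (hDK hx)).trans (le_abs_self Λ)) (fun x hx => haα x (hDK hx))
    hp₁ (hp₁M.mono fun x hx => hx.trans (le_abs_self M))
    hp₂ (hp₂M.mono fun x hx => hx.trans (le_abs_self M)) h₁ h₂
    (hsup.trans (le_add_of_nonneg_right zero_le_one))

end IsExitPair

theorem theorem2_local_stability_inverse_potential_general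
    {T ρ₀ c : ℝ} (hT : 0 < T) (hρ₀ : 0 < ρ₀) (hc : 0 < c)
    (hℓ : ContDiffOn ℝ 1 ℓ (closedBall 0 ρ₀)) (hℓ0 : ℓ 0 = 0)
    (hΩo : IsOpen Ω) (hΩb : Bornology.IsBounded Ω)
    (hΩsub : ∀ (x' : Esp d) (xn : ℝ), ‖x'‖ < ρ₀ → ℓ x' - c < xn → xn < ℓ x' →
      graphMk d x' xn ∈ Ω)
    (hΩdis : graphMk d 0 (ℓ 0) ∉ Ω)
    (hU : IsOpen U) (hΩU : closure Ω ⊆ U) (hH : ContDiffOn ℝ 1 H U)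
    (hH0 : 0 < ⟪H 0, nuUp d ℓ 0⟫)
    (ha : ContinuousOn a (closure Ω)) (ha0 : ∀ x ∈ closure Ω, a x ≠ 0) :
    ∃ ρ₁ ∈ Ioo 0 ρ₀, ∃ ℓt : Esp d → ℝ,
      ContDiffOn ℝ 2 ℓt (closedBall 0 ρ₁) ∧
      (∀ x' : Esp d, ‖x'‖ < ρ₁ → 0 < ℓt x') ∧
      (∀ x' : Esp d, ‖x'‖ = ρ₁ → ℓt x' = 0 ∧ gradient ℓt x' = 0) ∧
      graphDomain d ρ₁ ℓ ℓt ⊆ Ω ∧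
      (0 : Esp (d + 1)) ∈ frontier (graphDomain d ρ₁ ℓ ℓt) ∩ frontier Ω ∧
      ∀ M M₀ : ℝ, ∃ C > 0, ∀ p₁ p₂ : Esp (d + 1) → ℝ,
        AEStronglyMeasurable p₁ (volume.restrict Ω) → (∀ᵐ x ∂volume.restrict Ω, |p₁ x| ≤ M) →
        AEStronglyMeasurable p₂ (volume.restrict Ω) → (∀ᵐ x ∂volume.restrict Ω, |p₂ x| ≤ M) →
        ∀ u₁ u₂ : Esp (d + 1) → ℝ → ℝ,
        IsRegularSolution Ω T H p₁ a u₁ → IsRegularSolution Ω T H p₂ a u₂ →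
        ∫ t in Ioo 0 T, (⨆ x : graphDomain d ρ₁ ℓ ℓt, |deriv (u₂ x) t|) ^ 2 ≤ M₀ ^ 2 →
        √(∫ x in graphDomain d ρ₁ ℓ ℓt, (p₁ x - p₂ x) ^ 2)
          ≤ C * √(∫ t in Ioo 0 T, ∫ x' in ball (0 : Esp d) ρ₀,
            (deriv (u₁ (graphMk d x' (ℓ x'))) t - deriv (u₂ (graphMk d x' (ℓ x'))) t) ^ 2
              * omegaW d ℓ x') := by
  have hx₀ : graphMk d 0 (ℓ 0) = 0 := by rw [hℓ0, graphMk_zero]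
  have hΓ := fun x' (hx' : x' ∈ closedBall (0 : Esp d) ρ₀) =>
    graph_closedBall_subset_closure hρ₀ hc hℓ.continuousOn hΩsub hx'
  have h0Ω : (0 : Esp (d + 1)) ∈ closure Ω := hx₀ ▸ hΓ 0 (mem_closedBall_self hρ₀.le)
  have hℓ_diff : DifferentiableAt ℝ ℓ (horizontal d 0) := by
    rw [map_zero]
    exact (hℓ.contDiffAt (closedBall_mem_nhds 0 hρ₀)).differentiableAt one_ne_zero
  set β := omegaW d ℓ 0 * ⟪H 0, nuUp d ℓ 0⟫ with hβ_def
  have hβ : 0 < β := mul_pos (zero_lt_one.trans_le (one_le_omegaW ℓ 0)) hH0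
  have hexit : fderiv ℝ (graphDepth ℓ) 0 (H 0) = -β := by
    rw [fderiv_graphDepth_apply_eq_inner_nuUp hℓ_diff, map_zero, hβ_def]
  have hthin : ∀ᶠ r : ℝ in 𝓝[>] 0, r < ρ₀ ∧ r ^ 4 < c :=
    eventually_nhdsWithin_of_eventually_nhds <| (eventually_lt_nhds hρ₀).and <|
      ((continuous_pow 4).tendsto' (0 : ℝ) 0 (zero_pow four_ne_zero)).eventually_lt_const hc
  have hpair := eventually_isExitPair_graphDomain_bump (B := 2 * β) hx₀.symm hT (half_pos hβ) hρ₀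
    hℓ (hH.contDiffAt (hU.mem_nhds (hΩU h0Ω))) (by rw [hexit]; constructor <;> linarith)
  obtain ⟨r, P, ⟨hrρ, hrc⟩, hr⟩ := (hpair.and (hthin.and eventually_mem_nhdsWithin)).exists
  have hD : graphDomain d r ℓ (bump r) ⊆ Ω :=
    graphDomain_subset hrρ.le (fun x' hx' => (bump_le hx'.le).trans hrc.le) hΩsub
  refine ⟨r, ⟨hr, hrρ⟩, bump r, (contDiff_bump r).contDiffOn, fun x' => bump_pos,
    fun x' hx' => ⟨bump_of_norm_eq hx', gradient_bump_of_norm_eq hx'⟩, hD, ⟨?_, h0Ω, ?_⟩, ?_⟩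
  · have hnorm : ‖(0 : Esp d)‖ < r := by rwa [norm_zero]
    exact hx₀ ▸ graphMk_mem_frontier_graphDomain hnorm (bump_pos hnorm)
  · rw [hΩo.interior_eq, ← hx₀]
    exact hΩdis
  · exact P.exists_sqrt_integral_sq_sub_le hT (half_pos hβ) (by positivity) hρ₀ hrρ.le hℓ hΩo hΩb
      hD hΓ hU hΩU hH ha ha0

end LipschitzStability

/-- **Theorem 2** (local Hölder stability for the inverse zeroth-order
coefficient problem). -/
theorem theorem2_local_stability_inverse_potential
    (d : ℕ) (hd : 1 ≤ d) (T ρ₀ M δ₀ c : ℝ)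
    (hT : 0 < T) (hρ₀ : 0 < ρ₀) (hM : 0 < M) (hδ₀ : 0 < δ₀) (hc : 0 < c)
    (ℓ : Esp d → ℝ) (hℓ : ContDiffOn ℝ 2 ℓ (closedBall 0 ρ₀)) (hℓ0 : ℓ 0 = 0)
    (Ω : Set (Esp (d+1))) (hΩo : IsOpen Ω) (hΩb : Bornology.IsBounded Ω)
    (hΩsub : ∀ (x' : Esp d) (xn : ℝ), ‖x'‖ < ρ₀ → ℓ x' - c < xn → xn < ℓ x' →
      graphMk d x' xn ∈ Ω)
    (hΩdis : ∀ (x' : Esp d) (xn : ℝ), ‖x'‖ < ρ₀ → ℓ x' ≤ xn → xn < ℓ x' + c →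
      graphMk d x' xn ∉ Ω)
    (H : Esp (d+1) → Esp (d+1))
    (hH : IsAdmissible M δ₀ (closure Ω) H) (hH0 : δ₀ < ⟪H 0, nuUp d ℓ 0⟫)
    (a : Esp (d+1) → ℝ) (ha : ContDiffOn ℝ 1 a (closure Ω))
    (ha0 : ∀ x ∈ closure Ω, a x ≠ 0) :
    ∃ ρ₁ ∈ Set.Ioo 0 ρ₀, ∃ ℓt : Esp d → ℝ,
      ContDiffOn ℝ 2 ℓt (closedBall 0 ρ₁) ∧
      (∀ x' : Esp d, ‖x'‖ < ρ₁ → 0 < ℓt x') ∧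
      (∀ x' : Esp d, ‖x'‖ = ρ₁ → ℓt x' = 0 ∧ gradient ℓt x' = 0) ∧
      graphDomain d ρ₁ ℓ ℓt ⊆ Ω ∧
      (0 : Esp (d+1)) ∈ frontier (graphDomain d ρ₁ ℓ ℓt) ∩ frontier Ω ∧
      ∀ M₀ > (0:ℝ), ∃ C > (0:ℝ), ∃ θ ∈ Set.Ioo (0:ℝ) 1,
        ∀ p₁ p₂ : Esp (d+1) → ℝ,
          Measurable p₁ → (∀ᵐ x ∂(volume.restrict Ω), |p₁ x| ≤ M) →
          Measurable p₂ → (∀ᵐ x ∂(volume.restrict Ω), |p₂ x| ≤ M) →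
          ∀ u₁ u₂ : Esp (d+1) → ℝ → ℝ,
          ((ContDiffOn ℝ 1 (fun q : Esp (d+1) × ℝ => u₁ q.1 q.2) (closure Ω ×ˢ Icc 0 T) ∧
            ContDiffOn ℝ 1 (fun q : Esp (d+1) × ℝ => deriv (u₁ q.1) q.2)
              (closure Ω ×ˢ Icc 0 T) ∧
            (∀ x ∈ Ω, ∀ t ∈ Ioo 0 T,
              deriv (u₁ x) t + ⟪H x, gradient (fun z => u₁ z t) x⟫
                + p₁ x * u₁ x t = 0) ∧
            (∀ x ∈ Ω, u₁ x 0 = a x)) ∧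
            (∫ t in Ioo 0 T,
              (⨆ x : graphDomain d ρ₁ ℓ ℓt, |deriv (u₁ (x : Esp (d+1))) t|) ^ 2)
              ≤ M₀ ^ 2) →
          ((ContDiffOn ℝ 1 (fun q : Esp (d+1) × ℝ => u₂ q.1 q.2) (closure Ω ×ˢ Icc 0 T) ∧
            ContDiffOn ℝ 1 (fun q : Esp (d+1) × ℝ => deriv (u₂ q.1) q.2)
              (closure Ω ×ˢ Icc 0 T) ∧
            (∀ x ∈ Ω, ∀ t ∈ Ioo 0 T,
              deriv (u₂ x) t + ⟪H x, gradient (fun z => u₂ z t) x⟫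
                + p₂ x * u₂ x t = 0) ∧
            (∀ x ∈ Ω, u₂ x 0 = a x)) ∧
            (∫ t in Ioo 0 T,
              (⨆ x : graphDomain d ρ₁ ℓ ℓt, |deriv (u₂ (x : Esp (d+1))) t|) ^ 2)
              ≤ M₀ ^ 2) →
          Real.sqrt (∫ x in graphDomain d ρ₁ ℓ ℓt, (p₁ x - p₂ x) ^ 2) ≤
            C * ((Real.sqrt (∫ t in Ioo 0 T, ∫ x' in ball (0 : Esp d) ρ₀,
                (deriv (u₁  (graphMk d x' (ℓ x'))) t
                  - deriv (u₂  (graphMk d x' (ℓ x'))) t) ^ 2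
                  * omegaW d ℓ x')) ^ θ
              + Real.sqrt (∫ t in Ioo 0 T, ∫ x' in ball (0 : Esp d) ρ₀,
                (deriv (u₁  (graphMk d x' (ℓ x'))) t
                  - deriv (u₂  (graphMk d x' (ℓ x'))) t) ^ 2
                  * omegaW d ℓ x')) := by
  obtain ⟨U, hU, -, hΩU, hHU, -⟩ := hH
  have h0Ω : graphMk d 0 (ℓ 0) ∉ Ω :=
    hΩdis 0 (ℓ 0) (norm_zero.trans_lt hρ₀) le_rfl (lt_add_of_pos_right _ hc)
  obtain ⟨ρ₁, hρ₁, ℓt, hℓt, hpos, hzero, hD, hfrontier, hstable⟩ :=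
    theorem2_local_stability_inverse_potential_general hT hρ₀ hc (hℓ.of_le one_le_two) hℓ0 hΩo hΩb
      hΩsub h0Ω hU hΩU hHU (hδ₀.trans hH0) ha.continuousOn ha0
  refine ⟨ρ₁, hρ₁, ℓt, hℓt, hpos, hzero, hD, hfrontier, fun M₀ _ => ?_⟩
  obtain ⟨C, hC, hLip⟩ := hstable M M₀
  refine ⟨C, hC, 1 / 2, ⟨one_half_pos, one_half_lt_one⟩, ?_⟩
  rintro p₁ p₂ hp₁ hp₁M hp₂ hp₂M u₁ u₂ ⟨⟨hu₁, hu₁', heq₁, hinit₁⟩, -⟩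
    ⟨⟨hu₂, hu₂', heq₂, hinit₂⟩, hsup⟩
  exact (hLip p₁ p₂ hp₁.aestronglyMeasurable hp₁M hp₂.aestronglyMeasurable hp₂M u₁ u₂
    ⟨hu₁, hu₁', heq₁, hinit₁⟩ ⟨hu₂, hu₂', heq₂, hinit₂⟩ hsup).trans <|
    mul_le_mul_of_nonneg_left (le_add_of_nonneg_left (by positivity)) hC.le
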